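/- For n ≥ 2, the invariant ring F_q[V ⊕ V*]^{U_n}, i.e. the subalgebra of F_q[x_1,…,x_n,y_1,…,y_n] of elements fixed by every element of U_n, equals the F_q-subalgebra generated by the 4n−3 elements f_1,…,f_n, f_1*,…,f_n*, and u_j for 2−n ≤ j ≤ n−2. -/

import Mathlib

open MvPolynomial Matrix

variable (F : Type) [Field F] [Fintype F] (n : ℕ)

/-- `fX F n k` is the orbit product `f_k` (1-indexed, meaningful for `1 ≤ k ≤ n`). -/
noncomputable def fX (k : ℕ) : MvPolynomial (Fin n ⊕ Fin n) F :=
  if h : 1 ≤ k ∧ k ≤ n then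
    ∏ α : Fin (k - 1) → F,
      (X (Sum.inl ⟨k - 1, by omega⟩) +
        ∑ j : Fin (k - 1), C (α j) * X (Sum.inl ⟨j.val, by omega⟩))
  else 0

/-- `fY F n k` is `f_k^*` (1-indexed), the orbit product of `y_{n+1-k}`. -/
noncomputable def fY (k : ℕ) : MvPolynomial (Fin n ⊕ Fin n) F :=
  if h : 1 ≤ k ∧ k ≤ n then
    ∏ α : Fin (k - 1) → F,
      (X (Sum.inr ⟨n - k, by omega⟩) +
        ∑ j : Fin (k - 1), C (α j) * X (Sum.inr ⟨n - 1 - j.val, by omega⟩))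
  else 0

/-- `uInv F n j` is the invariant `u_j`, for `j : ℤ`. -/
noncomputable def uInv (j : ℤ) : MvPolynomial (Fin n ⊕ Fin n) F :=
  if 0 ≤ j then ∑ k : Fin n, X (Sum.inl k) ^ (Fintype.card F) ^ j.toNat * X (Sum.inr k)
  else ∑ k : Fin n, X (Sum.inl k) * X (Sum.inr k) ^ (Fintype.card F) ^ (-j).toNat

/-- `cX F n s t` is the Dickson-type invariant `c_{s,t}` (in the `x`-variables):
the sum over strictly increasing sequences `1 ≤ j_1 < ⋯ < j_{s-t} ≤ s` (encoded as
strictly monotone functions `Fin (s-t) → Fin s`) of `∏_l f_{j_l}^{(q-1)·q^{t+l-j_l}}`. -/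
noncomputable def cX (s t : ℕ) : MvPolynomial (Fin n ⊕ Fin n) F :=
  if s ≤ n then
    ∑ g ∈ Finset.univ.filter (fun g : Fin (s - t) → Fin s => ∀ a b : Fin (s - t), a < b → g a < g b),
      ∏ l : Fin (s - t),
        fX F n ((g l).val + 1) ^ ((Fintype.card F - 1) * (Fintype.card F) ^ (t + l.val - (g l).val))
  else 0

/-- `cY F n s t` is `c_{s,t}^*` (in the `y`-variables). -/
noncomputable def cY (s t : ℕ) : MvPolynomial (Fin n ⊕ Fin n) F :=
  if s ≤ n then
    ∑ g ∈ Finset.univ.filter (fun g : Fin (s - t) → Fin s => ∀ a b : Fin (s - t), a < b → g a < g b),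
      ∏ l : Fin (s - t),
        fY F n ((g l).val + 1) ^ ((Fintype.card F - 1) * (Fintype.card F) ^ (t + l.val - (g l).val))
  else 0

/-- The action of `σ ∈ GL_n(F)` on `F[V ⊕ V*] = F[x_1,…,x_n,y_1,…,y_n]`:
`σ` acts naturally on the span of the `x_j` (identified with `V`, so `σ·x_j = ∑_i σ_{ij} x_i`)
and by `σ·λ = λ ∘ σ⁻¹` on the span of the `y_j` (so `σ·y_j = ∑_i (σ⁻¹)_{ji} y_i`). -/
noncomputable def gact (σ : GL (Fin n) F) :
    MvPolynomial (Fin n ⊕ Fin n) F →ₐ[F] MvPolynomial (Fin n ⊕ Fin n) F :=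
  aeval (Sum.elim
    (fun j => ∑ i : Fin n, C ((σ : Matrix (Fin n) (Fin n) F) i j) * X (Sum.inl i))
    (fun j => ∑ i : Fin n,
      C (((σ⁻¹ : GL (Fin n) F) : Matrix (Fin n) (Fin n) F) j i) * X (Sum.inr i)))

/-- `σ` belongs to `U_n`: upper unipotent. -/
def isUpperUnipotent (σ : GL (Fin n) F) : Prop :=
  (∀ i : Fin n, (σ : Matrix (Fin n) (Fin n) F) i i = 1) ∧
    ∀ i j : Fin n, j < i → (σ : Matrix (Fin n) (Fin n) F) i j = 0

/-- `σ` belongs to `B_n`: upper triangular (invertibility is part of `GL`). -/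
def isUpperTriangular (σ : GL (Fin n) F) : Prop :=
  ∀ i j : Fin n, j < i → (σ : Matrix (Fin n) (Fin n) F) i j = 0


open MvPolynomial Matrix

section generic

variable {F : Type} [Field F] [Fintype F]
variable {R : Type*} [CommRing R] [Algebra F R] {Rt : Type*} [CommRing Rt] [Algebra F Rt]

/-- The `q`-linearised polynomial vanishing on `z 0, …, z (s-1)`. -/
noncomputable def DL (z : ℕ → R) : ℕ → (R →ₗ[F] R)
  | 0 => LinearMap.id
  | s + 1 => (FiniteField.frobeniusAlgHom F R).toLinearMap ∘ₗ DL z s -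
      (LinearMap.mulLeft F ((DL z s (z s)) ^ (Fintype.card F - 1))) ∘ₗ DL z s

variable (F)

theorem DL_zero (z : ℕ → R) (T : R) : DL (F := F) z 0 T = T := rfl

theorem DL_succ (z : ℕ → R) (s : ℕ) (T : R) : DL (F := F) z (s + 1) T =
    (DL (F := F) z s T) ^ (Fintype.card F) -
      (DL (F := F) z s (z s)) ^ (Fintype.card F - 1) * DL (F := F) z s T := by
  simp [DL]

theorem q_pos : 0 < Fintype.card F := Fintype.card_pos
theorem one_lt_q : 1 < Fintype.card F := Fintype.one_lt_card

theorem add_pow_q (a b : R) : (a + b) ^ Fintype.card F = a ^ Fintype.card F + b ^ Fintype.card F :=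
  map_add (FiniteField.frobeniusAlgHom F R) a b
theorem sub_pow_q (a b : R) : (a - b) ^ Fintype.card F = a ^ Fintype.card F - b ^ Fintype.card F :=
  map_sub (FiniteField.frobeniusAlgHom F R) a b

/-- iterated Frobenius as an algebra homomorphism -/
noncomputable def frob (R : Type*) [CommRing R] [Algebra F R] (i : ℕ) : R →ₐ[F] R :=
  (FiniteField.frobeniusAlgHom F R) ^ i

theorem frob_apply (i : ℕ) (a : R) : frob F R i a = a ^ (Fintype.card F) ^ i := by
  unfold frob
  rw [AlgHom.coe_pow, FiniteField.coe_frobeniusAlgHom, pow_iterate]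

theorem DL_self (z : ℕ → R) {s j : ℕ} (h : j < s) : DL (F := F) z s (z j) = 0 := by
  induction s with
  | zero => omega
  | succ s ih =>
    rw [DL_succ]
    rcases Nat.lt_succ_iff_lt_or_eq.mp h with h | h
    · rw [ih h, zero_pow (q_pos F).ne']; simp
    · subst h
      rw [← pow_succ, Nat.sub_add_cancel (q_pos F)]; simp

theorem DL_map (φ : R →ₐ[F] Rt) (z : ℕ → R) (s : ℕ) (T : R) :
    φ (DL (F := F) z s T) = DL (F := F) (fun i => φ (z i)) s (φ T) := by
  induction s generalizing T with
  | zero => rfl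
  | succ s ih => simp [DL_succ, ih]

theorem DL_congr {z z' : ℕ → R} {s : ℕ} (h : ∀ i < s, z i = z' i) (T : R) :
    DL (F := F) z s T = DL (F := F) z' s T := by
  induction s generalizing T with
  | zero => rfl
  | succ s ih =>
    rw [DL_succ, DL_succ, ih (fun i hi => h i (by omega)), ih (fun i hi => h i (by omega)),
      h s (by omega)]

theorem DL_shift (z : ℕ → R) (s : ℕ) (T : R) :
    DL (F := F) z (s + 1) T =
      DL (F := F) (fun i => z (i + 1) ^ Fintype.card F - z 0 ^ (Fintype.card F - 1) * z (i + 1)) s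
        (T ^ Fintype.card F - z 0 ^ (Fintype.card F - 1) * T) := by
  induction s generalizing T with
  | zero => simp [DL_succ, DL_zero]
  | succ s ih => rw [DL_succ, ih, ih, ← DL_succ]

theorem DL_shift_zero (z : ℕ → R) (hz : z 0 = 0) (s : ℕ) (T : R) :
    DL (F := F) z (s + 1) T = (DL (F := F) (fun i => z (i + 1)) s T) ^ Fintype.card F := by
  have hq : Fintype.card F - 1 ≠ 0 := by have := one_lt_q F; omega
  induction s generalizing T with
  | zero => simp [DL_succ, DL_zero, hz, hq]
  | succ s ih => rw [DL_succ, ih, ih, DL_succ, sub_pow_q, mul_pow]; congr 2; rw [pow_right_comm]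

/-- expansion of `DL` with coefficients in a given set. -/
theorem DL_expand (z : ℕ → R) (I : Submodule F R)
    (hI : ∀ a ∈ I, ∀ b ∈ I, a * b ∈ I) (s : ℕ)
    (hz : ∀ i < s, DL (F := F) z i (z i) ∈ I) :
    ∃ c : ℕ → R, (∀ i, c i ∈ I) ∧ ∀ T, DL (F := F) z s T =
      T ^ (Fintype.card F) ^ s + ∑ i ∈ Finset.range s, c i * T ^ (Fintype.card F) ^ i := by
  have hp : ∀ a ∈ I, ∀ k, a ^ (k + 1) ∈ I := by
    intro a ha k
    induction k with
    | zero => simpa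
    | succ k ih => rw [pow_succ]; exact hI _ ih _ ha
  have hq := one_lt_q F
  induction s with
  | zero => exact ⟨0, by simp, by simp [DL_zero]⟩
  | succ s ih =>
    obtain ⟨c, hc, h⟩ := ih (fun i hi => hz i (by omega))
    have hf := hz s (by omega)
    set f := DL (F := F) z s (z s) with hfdef
    have hf1 : f ^ (Fintype.card F - 1) ∈ I := by
      have := hp f hf (Fintype.card F - 1 - 1)
      rwa [Nat.sub_add_cancel (by omega)] at this
    have hcq : ∀ i, c i ^ Fintype.card F ∈ I := by
      intro i
      have := hp _ (hc i) (Fintype.card F - 1)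
      rwa [Nat.sub_add_cancel (by omega)] at this
    refine ⟨fun i => (if i = 0 then 0 else c (i - 1) ^ Fintype.card F) -
      f ^ (Fintype.card F - 1) * (if i = s then 1 else c i), ?_, ?_⟩
    · intro i
      apply I.sub_mem
      · split_ifs
        · exact I.zero_mem
        · exact hcq _
      · split_ifs
        · simpa using hf1
        · exact hI _ hf1 _ (hc i)
    · intro T
      rw [DL_succ, h, ← hfdef, add_pow_q]
      have e1 : (∑ i ∈ Finset.range s, c i * T ^ (Fintype.card F) ^ i) ^ Fintype.card F =
          ∑ i ∈ Finset.range s, c i ^ Fintype.card F * T ^ (Fintype.card F) ^ (i + 1) := by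
        have := map_sum (FiniteField.frobeniusAlgHom F R)
          (fun i => c i * T ^ (Fintype.card F) ^ i) (Finset.range s)
        simp only [FiniteField.coe_frobeniusAlgHom] at this
        rw [this]
        apply Finset.sum_congr rfl
        intro i _
        rw [mul_pow, ← pow_mul, pow_succ]
      rw [e1]
      simp only [sub_mul]
      rw [Finset.sum_sub_distrib, Finset.sum_range_succ' (n := s)]
      simp only [Nat.add_eq_zero_iff, one_ne_zero, and_false, if_false, Nat.add_sub_cancel, if_true,
        zero_mul, add_zero]
      rw [Finset.sum_range_succ (n := s)]
      have e2 : ∑ i ∈ Finset.range s, f ^ (Fintype.card F - 1) * (if i = s then 1 else c i) *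
          T ^ (Fintype.card F) ^ i = ∑ i ∈ Finset.range s, f ^ (Fintype.card F - 1) * (c i *
          T ^ (Fintype.card F) ^ i) := by
        apply Finset.sum_congr rfl
        intro i hi
        rw [if_neg (by have := Finset.mem_range.mp hi; omega), mul_assoc]
      rw [e2, ← Finset.mul_sum, ← pow_mul, ← pow_succ]
      simp
      ring

theorem prod_add_smul [IsDomain R] (Y Z : R) :
    ∏ a : F, (Y + algebraMap F R a * Z) = Y ^ Fintype.card F - Z ^ (Fintype.card F - 1) * Y := by
  have hq := one_lt_q F
  by_cases hZ : Z = 0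
  · subst hZ
    rw [zero_pow (by omega)]
    simp
  have key : (Polynomial.X ^ Fintype.card F - Polynomial.X : Polynomial F) =
      ∏ a : F, (Polynomial.X - Polynomial.C a) := by
    have hm : (Polynomial.X ^ Fintype.card F - Polynomial.X : Polynomial F).Monic := by
      apply Polynomial.monic_X_pow_sub
      simpa using hq
    have := Polynomial.prod_multiset_X_sub_C_of_monic_of_roots_card_eq hm (by
      rw [FiniteField.roots_X_pow_card_sub_X, FiniteField.X_pow_card_sub_X_natDegree_eq F hq]
      simp)
    rw [FiniteField.roots_X_pow_card_sub_X] at this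
    exact this.symm
  have key2 : ∀ t : FractionRing R, t ^ Fintype.card F - t =
      ∏ a : F, (t + algebraMap F (FractionRing R) a) := by
    intro t
    have := congrArg (Polynomial.aeval t) key
    rw [← Equiv.prod_comp (Equiv.neg F)] at this
    simpa [map_prod] using this
  apply IsFractionRing.injective R (FractionRing R)
  have hZ' : algebraMap R (FractionRing R) Z ≠ 0 := by
    simpa using hZ
  have := key2 (algebraMap R (FractionRing R) Y / algebraMap R (FractionRing R) Z)
  simp only [map_prod, map_sub, map_mul, map_add, map_pow, ← IsScalarTower.algebraMap_apply]
  set y := algebraMap R (FractionRing R) Y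
  set z := algebraMap R (FractionRing R) Z
  have h2 : ∀ a : F, y + algebraMap F (FractionRing R) a * z =
      z * (y / z + algebraMap F (FractionRing R) a) := by
    intro a; field_simp
  simp only [h2]
  rw [Finset.prod_mul_distrib, ← this, Finset.prod_const, Finset.card_univ, mul_sub, ← mul_pow]
  congr 1
  · congr 1; field_simp
  · obtain ⟨k, hk⟩ : ∃ k, Fintype.card F = k + 1 := ⟨Fintype.card F - 1, by omega⟩
    rw [hk, Nat.add_sub_cancel, pow_succ]
    field_simp

/-- `DL` as a product over the span. -/
theorem DL_eq_prod [IsDomain R] (z : ℕ → R) (s : ℕ) (T : R) :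
    DL (F := F) z s T = ∏ α : Fin s → F, (T + ∑ j : Fin s, algebraMap F R (α j) * z j) := by
  induction s generalizing T with
  | zero => simp [DL_zero]
  | succ s ih =>
    rw [DL_succ, ← prod_add_smul]
    rw [← (Fin.snocEquiv (fun _ : Fin (s+1) => F)).prod_comp, Fintype.prod_prod_type]
    apply Finset.prod_congr rfl
    intro a _
    rw [← Algebra.smul_def, ← map_smul, ← map_add, ih]
    apply Finset.prod_congr rfl
    intro α _
    rw [Fin.sum_univ_castSucc]
    simp [Fin.snocEquiv, Algebra.smul_def]
    ring

end generic

open MvPolynomial Matrix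

section setup
set_option linter.unusedSectionVars false

variable (F : Type) [Field F] [Fintype F] (n : ℕ)

/-- the `x`-variables as a sequence -/
noncomputable def xs (i : ℕ) : MvPolynomial (Fin n ⊕ Fin n) F :=
  if h : i < n then X (Sum.inl ⟨i, h⟩) else 0

/-- the `y`-variables, in reverse order, as a sequence -/
noncomputable def ys (i : ℕ) : MvPolynomial (Fin n ⊕ Fin n) F :=
  if h : i < n then X (Sum.inr ⟨n - 1 - i, by omega⟩) else 0

noncomputable def fx (i : ℕ) : MvPolynomial (Fin n ⊕ Fin n) F := DL (F := F) (xs F n) i (xs F n i)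
noncomputable def fy (i : ℕ) : MvPolynomial (Fin n ⊕ Fin n) F := DL (F := F) (ys F n) i (ys F n i)

noncomputable def Bf (i j : ℕ) : MvPolynomial (Fin n ⊕ Fin n) F :=
  ∑ k : Fin n, X (Sum.inl k) ^ (Fintype.card F) ^ i * X (Sum.inr k) ^ (Fintype.card F) ^ j

theorem xs_fin (k : Fin n) : xs F n k = X (Sum.inl k) := by simp [xs]
theorem ys_fin (k : Fin n) : ys F n (n - 1 - k) = X (Sum.inr k) := by
  have := k.2
  rw [ys, dif_pos (by omega)]
  congr 2
  ext
  simp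
  omega

theorem xs_ge {i : ℕ} (h : n ≤ i) : xs F n i = 0 := by simp [xs, h]
theorem ys_ge {i : ℕ} (h : n ≤ i) : ys F n i = 0 := by simp [ys, h]
theorem fx_ge {i : ℕ} (h : n ≤ i) : fx F n i = 0 := by simp [fx, xs_ge F n h]
theorem fy_ge {i : ℕ} (h : n ≤ i) : fy F n i = 0 := by simp [fy, ys_ge F n h]

theorem fX_eq (i : ℕ) (hi : i < n) : fX F n (i + 1) = fx F n i := by
  rw [fX, dif_pos ⟨by omega, by omega⟩, fx, DL_eq_prod]
  apply Finset.prod_congr rfl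
  intro α _
  congr 1
  · simp [xs, hi]
  · apply Finset.sum_congr rfl
    intro j _
    have hj : (j : ℕ) < i := j.2
    rw [xs, dif_pos (by omega)]
    rfl

theorem fY_eq (i : ℕ) (hi : i < n) : fY F n (i + 1) = fy F n i := by
  rw [fY, dif_pos ⟨by omega, by omega⟩, fy, DL_eq_prod]
  apply Finset.prod_congr rfl
  intro α _
  congr 1
  · rw [ys, dif_pos hi]
    congr 3
    omega
  · apply Finset.sum_congr rfl
    intro j _
    have hj : (j : ℕ) < i := j.2
    rw [ys, dif_pos (by omega)]
    rfl

theorem uInv_nat (j : ℕ) : uInv F n (j : ℤ) = Bf F n j 0 := by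
  simp [uInv, Bf]

theorem uInv_neg_nat (j : ℕ) : uInv F n (-(j : ℤ)) = Bf F n 0 j := by
  rcases Nat.eq_zero_or_pos j with h | h
  · subst h; simp [uInv, Bf]
  · rw [uInv, if_neg (by omega)]
    simp [Bf]

theorem Bf_add (i j a : ℕ) : Bf F n (i + a) (j + a) = (Bf F n i j) ^ (Fintype.card F) ^ a := by
  rw [← frob_apply, Bf, Bf, map_sum]
  apply Finset.sum_congr rfl
  intro k _
  rw [frob_apply, mul_pow, ← pow_mul, ← pow_mul, pow_add, pow_add]

theorem Bf_eq (i j : ℕ) : Bf F n i j = (uInv F n ((i : ℤ) - j)) ^ (Fintype.card F) ^ (min i j) := by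
  rcases le_total i j with h | h
  · obtain ⟨k, rfl⟩ := Nat.exists_eq_add_of_le h
    rw [min_eq_left h]
    have : ((i : ℤ) - ((i + k : ℕ) : ℤ)) = -(k : ℤ) := by push_cast; ring
    rw [this, uInv_neg_nat, ← Bf_add]
    congr 1 <;> omega
  · obtain ⟨k, rfl⟩ := Nat.exists_eq_add_of_le h
    rw [min_eq_right h]
    have : (((j + k : ℕ) : ℤ) - (j : ℤ)) = (k : ℤ) := by push_cast; ring
    rw [this, uInv_nat, ← Bf_add]
    congr 1 <;> omega

/-- generators -/
def Ggen : Set (MvPolynomial (Fin n ⊕ Fin n) F) := Set.range (fx F n) ∪ Set.range (fy F n)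

/-- the algebra with all the `u_j`. -/
noncomputable def Aal : Subalgebra F (MvPolynomial (Fin n ⊕ Fin n) F) :=
  Algebra.adjoin F (Ggen F n ∪ Set.range (uInv F n))

theorem G_mem_A {g} (hg : g ∈ Ggen F n) : g ∈ Aal F n := Algebra.subset_adjoin (Or.inl hg)
theorem fx_mem_G (i) : fx F n i ∈ Ggen F n := Or.inl ⟨i, rfl⟩
theorem fy_mem_G (i) : fy F n i ∈ Ggen F n := Or.inr ⟨i, rfl⟩
theorem u_mem_A (j) : uInv F n j ∈ Aal F n := Algebra.subset_adjoin (Or.inr ⟨j, rfl⟩)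
theorem Bf_mem_A (i j) : Bf F n i j ∈ Aal F n := by
  rw [Bf_eq]; exact pow_mem (u_mem_A F n _) _

noncomputable def JA : Submodule F (MvPolynomial (Fin n ⊕ Fin n) F) :=
  Submodule.span F (Ggen F n) * Subalgebra.toSubmodule (Aal F n)

theorem JA_mul {a b} (ha : a ∈ JA F n) (hb : b ∈ Aal F n) : a * b ∈ JA F n := by
  have : a * b ∈ JA F n * Subalgebra.toSubmodule (Aal F n) := Submodule.mul_mem_mul ha hb
  rwa [JA, mul_assoc, (Subalgebra.isIdempotentElem_toSubmodule (Aal F n)).eq] at this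

theorem G_mem_JA {g} (hg : g ∈ Ggen F n) : g ∈ JA F n := by
  have := Submodule.mul_mem_mul (Submodule.subset_span (R := F) hg)
    (show (1 : MvPolynomial (Fin n ⊕ Fin n) F) ∈ Subalgebra.toSubmodule (Aal F n) from one_mem (Aal F n))
  simpa [JA] using this

theorem JA_le_A {a} (ha : a ∈ JA F n) : a ∈ Aal F n := by
  have : JA F n ≤ Subalgebra.toSubmodule (Aal F n) := by
    rw [JA]
    apply Submodule.mul_le.mpr
    intro a ha b hb
    have h2 : Submodule.span F (Ggen F n) ≤ Subalgebra.toSubmodule (Aal F n) :=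
      Submodule.span_le.mpr (fun g hg => G_mem_A F n hg)
    exact mul_mem (S := Subalgebra F _) (s := Aal F n) (h2 ha) hb
  exact this ha

theorem JA_mul_JA {a b} (ha : a ∈ JA F n) (hb : b ∈ JA F n) : a * b ∈ JA F n :=
  JA_mul F n ha (JA_le_A F n hb)

/-- the bilinear evaluation of the two linearised polynomials -/
theorem DL_bilin (s t : ℕ) (h : n ≤ s + t + 1) :
    ∑ k : Fin n, DL (F := F) (xs F n) s (xs F n k) * DL (F := F) (ys F n) t (ys F n (n - 1 - k)) =
      if s + t + 1 = n then fx F n s * fy F n t else 0 := by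
  split_ifs with h1
  · rw [Finset.sum_eq_single (⟨s, by omega⟩ : Fin n)]
    · rw [fx, fy]
      congr 3
      simp; omega
    · intro k _ hk
      have hk' : (k : ℕ) ≠ s := fun hh => hk (by ext; exact hh)
      have := k.2
      rcases lt_or_gt_of_ne hk' with h2 | h2
      · rw [DL_self F _ h2, zero_mul]
      · rw [DL_self F (ys F n) (by omega : n - 1 - (k : ℕ) < t), mul_zero]
    · simp
  · apply Finset.sum_eq_zero
    intro k _
    have := k.2
    rcases lt_or_ge (k : ℕ) s with h2 | h2
    · rw [DL_self F _ h2, zero_mul]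
    · rw [DL_self F (ys F n) (by omega : n - 1 - (k : ℕ) < t), mul_zero]

theorem Bf_mem_JA (s t : ℕ) (h : n ≤ s + t + 1) : Bf F n s t ∈ JA F n := by
  obtain ⟨c, hc, hcx⟩ := DL_expand F (xs F n) (JA F n) (fun a ha b hb => JA_mul_JA F n ha hb) s
    (fun i _ => G_mem_JA F n (fx_mem_G F n i))
  obtain ⟨d, hd, hdy⟩ := DL_expand F (ys F n) (JA F n) (fun a ha b hb => JA_mul_JA F n ha hb) t
    (fun i _ => G_mem_JA F n (fy_mem_G F n i))
  have h1 := DL_bilin F n s t h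
  have h2 : (if s + t + 1 = n then fx F n s * fy F n t else 0) ∈ JA F n := by
    split_ifs
    · exact JA_mul_JA F n (G_mem_JA F n (fx_mem_G F n s)) (G_mem_JA F n (fy_mem_G F n t))
    · exact Submodule.zero_mem _
  have h3 : ∑ k : Fin n, DL (F := F) (xs F n) s (xs F n k) * DL (F := F) (ys F n) t (ys F n (n - 1 - k))
      = Bf F n s t + ∑ i ∈ Finset.range s, c i * Bf F n i t + ∑ j ∈ Finset.range t, d j * Bf F n s j
        + ∑ i ∈ Finset.range s, ∑ j ∈ Finset.range t, c i * (d j * Bf F n i j) := by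
    simp only [hcx, hdy, xs_fin, ys_fin, Bf, add_mul, mul_add, Finset.sum_add_distrib,
      Finset.mul_sum, Finset.sum_mul]
    have e1 : ∀ (f : Fin n → ℕ → MvPolynomial (Fin n ⊕ Fin n) F) (s : Finset ℕ),
        ∑ k, ∑ i ∈ s, f k i = ∑ i ∈ s, ∑ k, f k i := fun f s => Finset.sum_comm
    simp only [e1]
    have e2 : ∀ (f : ℕ → ℕ → MvPolynomial (Fin n ⊕ Fin n) F),
        ∑ i ∈ Finset.range t, ∑ j ∈ Finset.range s, f i j =
          ∑ j ∈ Finset.range s, ∑ i ∈ Finset.range t, f i j := fun f => Finset.sum_comm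
    rw [e2]
    simp only [mul_assoc, mul_left_comm (X (Sum.inl _) ^ _)]
    ring
  rw [h1] at h3
  have h4 : Bf F n s t = (if s + t + 1 = n then fx F n s * fy F n t else 0)
      - (∑ i ∈ Finset.range s, c i * Bf F n i t + ∑ j ∈ Finset.range t, d j * Bf F n s j
        + ∑ i ∈ Finset.range s, ∑ j ∈ Finset.range t, c i * (d j * Bf F n i j)) := by
    rw [h3]; ring
  rw [h4]
  apply Submodule.sub_mem _ h2
  apply Submodule.add_mem _ (Submodule.add_mem _ _ _)
  · exact Submodule.sum_mem _ fun i _ => Submodule.sum_mem _ fun j _ =>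
      JA_mul F n (hc i) (mul_mem (JA_le_A F n (hd j)) (Bf_mem_A F n _ _))
  · exact Submodule.sum_mem _ fun i _ => JA_mul F n (hc i) (Bf_mem_A F n _ _)
  · exact Submodule.sum_mem _ fun i _ => JA_mul F n (hd i) (Bf_mem_A F n _ _)

/-- the exponents `a_j` -/
def aexp (j : ℤ) : ℕ := (n - j.natAbs) / 2

theorem u_pow_mem_JA (j : ℤ) : (uInv F n j) ^ (Fintype.card F) ^ (aexp n j) ∈ JA F n := by
  rcases Int.natAbs_eq j with h | h
  · have h1 := Bf_mem_JA F n (j.natAbs + aexp n j) (0 + aexp n j) (by unfold aexp; omega)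
    rw [Bf_add, ← uInv_nat, ← h] at h1
    exact h1
  · have h1 := Bf_mem_JA F n (0 + aexp n j) (j.natAbs + aexp n j) (by unfold aexp; omega)
    rw [Bf_add, ← uInv_neg_nat, ← h] at h1
    exact h1

end setup

open MvPolynomial Matrix

section spanning
set_option linter.unusedSectionVars false

variable (F : Type) [Field F] [Fintype F] (n : ℕ)

theorem adjoin_le_of_mul_closed {K R : Type*} [CommRing K] [CommRing R] [Algebra K R]
    (M : Submodule K R) (s : Set R) (h1 : (1 : R) ∈ M) (hs : ∀ g ∈ s, ∀ m ∈ M, g * m ∈ M) :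
    ∀ a ∈ Algebra.adjoin K s, a ∈ M := by
  intro a ha
  have : ∀ m ∈ M, a * m ∈ M := by
    induction ha using Algebra.adjoin_induction with
    | mem x hx => exact hs x hx
    | algebraMap r => intro m hm; rw [← Algebra.smul_def]; exact M.smul_mem _ hm
    | add x y _ _ hx hy => intro m hm; rw [add_mul]; exact M.add_mem (hx m hm) (hy m hm)
    | mul x y _ _ hx hy => intro m hm; rw [mul_assoc]; exact hx _ (hy m hm)
  simpa using this 1 h1

/-- reduced exponents -/
abbrev Eidx : Type :=
  (j : ↥(Finset.Icc (2 - (n : ℤ)) ((n : ℤ) - 2))) → Fin ((Fintype.card F) ^ (aexp n j.1))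

/-- reduced monomials in the `u_j` for index `n`, evaluated in an arbitrary ring -/
noncomputable def uE {R : Type*} [CommRing R] (v : ℤ → R) (e : Eidx F n) : R :=
  ∏ j, (v j.1) ^ (e j : ℕ)

theorem uE_mem_A (e : Eidx F n) : uE F n (uInv F n) e ∈ Aal F n :=
  Subalgebra.prod_mem _ fun j _ => pow_mem (u_mem_A F n _) _

theorem aexp_zero {j : ℤ} (h : j ∉ Finset.Icc (2 - (n : ℤ)) ((n : ℤ) - 2)) : aexp n j = 0 := by
  simp only [Finset.mem_Icc, not_and, not_le] at h
  unfold aexp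
  omega

theorem A_le_span_sup_JA : ∀ a ∈ Aal F n,
    a ∈ Submodule.span F (Set.range (uE F n (uInv F n))) ⊔ JA F n := by
  have hle : ∀ m ∈ Submodule.span F (Set.range (uE F n (uInv F n))) ⊔ JA F n, m ∈ Aal F n := by
    have : Submodule.span F (Set.range (uE F n (uInv F n))) ⊔ JA F n ≤
        Subalgebra.toSubmodule (Aal F n) := by
      apply sup_le
      · rw [Submodule.span_le]
        rintro _ ⟨e, rfl⟩
        exact uE_mem_A F n e
      · intro a ha; exact JA_le_A F n ha
    exact fun m hm => this hm
  apply adjoin_le_of_mul_closed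
  · apply Submodule.mem_sup_left
    apply Submodule.subset_span
    refine ⟨fun j => ⟨0, pow_pos (q_pos F) _⟩, ?_⟩
    simp [uE]
  · rintro g (hg | ⟨j, rfl⟩) m hm
    · apply Submodule.mem_sup_right
      exact JA_mul F n (G_mem_JA F n hg) (hle m hm)
    · by_cases hj : j ∈ Finset.Icc (2 - (n : ℤ)) ((n : ℤ) - 2)
      · obtain ⟨m1, hm1, m2, hm2, rfl⟩ := Submodule.mem_sup.mp hm
        rw [mul_add]
        apply Submodule.add_mem
        · clear hm hm2
          induction hm1 using Submodule.span_induction with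
          | zero => simp
          | add x y _ _ hx hy => rw [mul_add]; exact Submodule.add_mem _ hx hy
          | smul a x _ hx => rw [mul_smul_comm]; exact Submodule.smul_mem _ _ hx
          | mem x hx =>
            obtain ⟨e, rfl⟩ := hx
            classical
            set J : ↥(Finset.Icc (2 - (n : ℤ)) ((n : ℤ) - 2)) := ⟨j, hj⟩ with hJ
            have e1 : uInv F n j * uE F n (uInv F n) e = uInv F n j ^ ((e J : ℕ) + 1) *
                ∏ i ∈ Finset.univ.erase J, uInv F n i.1 ^ (e i : ℕ) := by
              rw [uE, ← Finset.mul_prod_erase _ _ (Finset.mem_univ J), pow_succ]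
              ring
            rw [e1]
            by_cases hlt : (e J : ℕ) + 1 < (Fintype.card F) ^ (aexp n j)
            · apply Submodule.mem_sup_left
              apply Submodule.subset_span
              refine ⟨Function.update e J ⟨(e J : ℕ) + 1, hlt⟩, ?_⟩
              rw [uE, ← Finset.mul_prod_erase _ _ (Finset.mem_univ J)]
              congr 1
              · simp [hJ]
              · apply Finset.prod_congr rfl
                intro i hi
                rw [Function.update_of_ne (Finset.ne_of_mem_erase hi)]
            · have h2 : (e J : ℕ) + 1 = (Fintype.card F) ^ (aexp n j) := by
                have := (e J).2
                change (e J : ℕ) < (Fintype.card F) ^ (aexp n j) at this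
                omega
              apply Submodule.mem_sup_right
              rw [h2]
              exact JA_mul F n (u_pow_mem_JA F n j)
                (Subalgebra.prod_mem _ fun j _ => pow_mem (u_mem_A F n _) _)
        · apply Submodule.mem_sup_right
          rw [mul_comm]
          exact JA_mul F n hm2 (u_mem_A F n j)
      · apply Submodule.mem_sup_right
        have := u_pow_mem_JA F n j
        rw [aexp_zero n hj, pow_zero, pow_one] at this
        exact JA_mul F n this (hle m hm)

/-- The polynomial ring in the `f_i, f_i^*`. -/
noncomputable def phi : MvPolynomial (Fin n ⊕ Fin n) F →ₐ[F] MvPolynomial (Fin n ⊕ Fin n) F :=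
  aeval (Sum.elim (fun i : Fin n => fx F n i) (fun i : Fin n => fy F n i))

theorem DL_homog {σ : Type*} (z : ℕ → MvPolynomial σ F) (hz : ∀ i, (z i).IsHomogeneous 1) (s : ℕ)
    (T : MvPolynomial σ F) (hT : T.IsHomogeneous 1) :
    (DL (F := F) z s T).IsHomogeneous ((Fintype.card F) ^ s) := by
  induction s generalizing T with
  | zero => simpa [DL_zero] using hT
  | succ s ih =>
    rw [DL_succ]
    apply IsHomogeneous.sub
    · rw [pow_succ]; exact (ih T hT).pow _
    · have := ((ih _ (hz s)).pow (Fintype.card F - 1)).mul (ih T hT)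
      have hq := q_pos F
      have e : (Fintype.card F) ^ (s + 1) =
          (Fintype.card F) ^ s * (Fintype.card F - 1) + (Fintype.card F) ^ s := by
        obtain ⟨r, hr⟩ : ∃ r, Fintype.card F = r + 1 := ⟨Fintype.card F - 1, by omega⟩
        rw [hr, pow_succ]
        simp only [Nat.add_sub_cancel]
        ring
      rw [e]
      exact this

theorem xs_homog (i) : (xs F n i).IsHomogeneous 1 := by
  unfold xs; split_ifs
  · exact isHomogeneous_X _ _
  · exact isHomogeneous_zero _ _ _
theorem ys_homog (i) : (ys F n i).IsHomogeneous 1 := by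
  unfold ys; split_ifs
  · exact isHomogeneous_X _ _
  · exact isHomogeneous_zero _ _ _
theorem fx_homog (i) : (fx F n i).IsHomogeneous ((Fintype.card F) ^ i) :=
  DL_homog F _ (xs_homog F n) _ _ (xs_homog F n _)
theorem fy_homog (i) : (fy F n i).IsHomogeneous ((Fintype.card F) ^ i) :=
  DL_homog F _ (ys_homog F n) _ _ (ys_homog F n _)
theorem u_homog (j) : ∃ d, (uInv F n j).IsHomogeneous d := by
  unfold uInv
  split_ifs
  · exact ⟨_, IsHomogeneous.sum _ _ _ fun k _ => ((isHomogeneous_X_pow _ _).mul (isHomogeneous_X _ _))⟩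
  · exact ⟨_, IsHomogeneous.sum _ _ _ fun k _ => ((isHomogeneous_X _ _).mul (isHomogeneous_X_pow _ _))⟩

theorem uE_homog (e) : ∃ d, (uE F n (uInv F n) e).IsHomogeneous d := by
  choose d hd using u_homog F n
  exact ⟨_, IsHomogeneous.prod _ _ _ fun j _ => (hd _).pow _⟩

theorem phi_monomial_homog (s) : ∃ d, (phi F n (monomial s 1)).IsHomogeneous d := by
  rw [phi, aeval_monomial, map_one, one_mul, Finsupp.prod]
  have : ∀ i, ∃ d, (Sum.elim (fun i : Fin n => fx F n i) (fun i : Fin n => fy F n i) i).IsHomogeneous d := by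
    rintro (i | i)
    · exact ⟨_, fx_homog F n i⟩
    · exact ⟨_, fy_homog F n i⟩
  choose d hd using this
  exact ⟨_, IsHomogeneous.prod _ _ _ fun j _ => (hd _).pow _⟩

noncomputable def N0 : Submodule F (MvPolynomial (Fin n ⊕ Fin n) F) :=
  Submodule.span F (Set.range fun p : ((Fin n ⊕ Fin n) →₀ ℕ) × Eidx F n =>
    phi F n (monomial p.1 1) * uE F n (uInv F n) p.2)

theorem N0_component {a} (ha : a ∈ N0 F n) (d : ℕ) : homogeneousComponent d a ∈ N0 F n := by
  induction ha using Submodule.span_induction with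
  | zero => simp
  | add x y _ _ hx hy => rw [map_add]; exact Submodule.add_mem _ hx hy
  | smul a x _ hx => rw [map_smul]; exact Submodule.smul_mem _ _ hx
  | mem x hx =>
    obtain ⟨⟨s, e⟩, rfl⟩ := hx
    obtain ⟨d1, h1⟩ := phi_monomial_homog F n s
    obtain ⟨d2, h2⟩ := uE_homog F n e
    have h3 := h1.mul h2
    rw [homogeneousComponent_of_mem h3]
    split_ifs
    · exact Submodule.subset_span ⟨⟨s, e⟩, rfl⟩
    · simp

theorem G_mul_N0 {g a} (hg : g ∈ Ggen F n) (ha : a ∈ N0 F n) : g * a ∈ N0 F n := by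
  have key : ∀ i : Fin n ⊕ Fin n, phi F n (X i) * a ∈ N0 F n := by
    intro i
    induction ha using Submodule.span_induction with
    | zero => simp
    | add x y _ _ hx hy => rw [mul_add]; exact Submodule.add_mem _ hx hy
    | smul a x _ hx => rw [mul_smul_comm]; exact Submodule.smul_mem _ _ hx
    | mem x hx =>
      obtain ⟨⟨s, e⟩, rfl⟩ := hx
      apply Submodule.subset_span
      refine ⟨⟨Finsupp.single i 1 + s, e⟩, ?_⟩
      simp only
      rw [← mul_assoc, ← map_mul, X, monomial_mul, one_mul]
  rcases hg with ⟨i, rfl⟩ | ⟨i, rfl⟩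
  · by_cases h : i < n
    · simpa [phi] using key (Sum.inl ⟨i, h⟩)
    · rw [fx_ge F n (by omega)]; simp
  · by_cases h : i < n
    · simpa [phi] using key (Sum.inr ⟨i, h⟩)
    · rw [fy_ge F n (by omega)]; simp

theorem homog_mem_vars {a : MvPolynomial (Fin n ⊕ Fin n) F} {d : ℕ} (hd : 0 < d)
    (ha : a.IsHomogeneous d) : a ∈ idealOfVars (Fin n ⊕ Fin n) F := by
  rw [← pow_one (idealOfVars _ _), mem_pow_idealOfVars_iff']
  intro x hx
  by_contra h
  have h1 := ha h
  have h2 : x.degree = 0 := by change Finsupp.degree x < 1 at hx; omega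
  have h3 : x = 0 := (Finsupp.degree_eq_zero_iff x).mp h2
  subst h3
  simp at h1
  omega

theorem G_mem_vars {g} (hg : g ∈ Ggen F n) : g ∈ idealOfVars (Fin n ⊕ Fin n) F := by
  rcases hg with ⟨i, rfl⟩ | ⟨i, rfl⟩
  · exact homog_mem_vars F n (pow_pos (q_pos F) i) (fx_homog F n i)
  · exact homog_mem_vars F n (pow_pos (q_pos F) i) (fy_homog F n i)

theorem nakayama (k : ℕ) : ∀ a ∈ Aal F n, ∃ ν ∈ N0 F n, a - ν ∈ (idealOfVars (Fin n ⊕ Fin n) F) ^ k := by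
  induction k with
  | zero => intro a _; exact ⟨0, Submodule.zero_mem _, by simp⟩
  | succ k ih =>
    intro a ha
    obtain ⟨m1, hm1, m2, hm2, rfl⟩ := Submodule.mem_sup.mp (A_le_span_sup_JA F n a ha)
    have h1 : m1 ∈ N0 F n := by
      have : Submodule.span F (Set.range (uE F n (uInv F n))) ≤ N0 F n := by
        rw [Submodule.span_le]
        rintro _ ⟨e, rfl⟩
        apply Submodule.subset_span
        refine ⟨⟨0, e⟩, ?_⟩
        simp
      exact this hm1
    have h2 : ∃ ν ∈ N0 F n, m2 - ν ∈ (idealOfVars (Fin n ⊕ Fin n) F) ^ (k + 1) := by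
      clear ha h1 hm1
      induction hm2 using Submodule.mul_induction_on' with
      | mem_mul_mem g hg b hb =>
        obtain ⟨ν, hν, hb'⟩ := ih b hb
        induction hg using Submodule.span_induction with
        | zero => exact ⟨0, Submodule.zero_mem _, by simp⟩
        | add x y _ _ hx hy =>
          obtain ⟨ν1, h1, h1'⟩ := hx
          obtain ⟨ν2, h2, h2'⟩ := hy
          refine ⟨ν1 + ν2, Submodule.add_mem _ h1 h2, ?_⟩
          convert Ideal.add_mem _ h1' h2' using 1; ring
        | smul c x _ hx =>
          obtain ⟨ν1, h1, h1'⟩ := hx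
          refine ⟨c • ν1, Submodule.smul_mem _ _ h1, ?_⟩
          rw [smul_mul_assoc, ← smul_sub, smul_eq_C_mul]
          exact Ideal.mul_mem_left _ _ h1'
        | mem x hx =>
          refine ⟨x * ν, G_mul_N0 F n hx hν, ?_⟩
          rw [← mul_sub, pow_succ']
          exact Ideal.mul_mem_mul (G_mem_vars F n hx) hb'
      | add x _ y _ hx hy =>
          obtain ⟨ν1, h1, h1'⟩ := hx
          obtain ⟨ν2, h2, h2'⟩ := hy
          refine ⟨ν1 + ν2, Submodule.add_mem _ h1 h2, ?_⟩
          convert Ideal.add_mem _ h1' h2' using 1; ring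
    obtain ⟨ν, hν, hb⟩ := h2
    refine ⟨m1 + ν, Submodule.add_mem _ h1 hν, ?_⟩
    convert hb using 1; ring

theorem A_le_N0 : ∀ a ∈ Aal F n, a ∈ N0 F n := by
  intro a ha
  obtain ⟨ν, hν, h⟩ := nakayama F n (a.totalDegree + 1) a ha
  rw [← sum_homogeneousComponent a]
  apply Submodule.sum_mem
  intro d hd
  have hd' := Finset.mem_range.mp hd
  have : homogeneousComponent d a = homogeneousComponent d ν := by
    rw [← sub_eq_zero, ← map_sub]
    apply homogeneousComponent_eq_zero'
    intro x hx hxd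
    rw [mem_pow_idealOfVars_iff'] at h
    rw [mem_support_iff] at hx
    apply hx
    apply h
    omega
  rw [this]
  exact N0_component F n hν d

theorem A_span : ∀ a ∈ Aal F n, ∃ p : Eidx F n → MvPolynomial (Fin n ⊕ Fin n) F,
    a = ∑ e, phi F n (p e) * uE F n (uInv F n) e := by
  intro a ha
  have := A_le_N0 F n a ha
  clear ha
  induction this using Submodule.span_induction with
  | zero => exact ⟨0, by simp⟩
  | add x y _ _ hx hy =>
    obtain ⟨p, rfl⟩ := hx
    obtain ⟨p', rfl⟩ := hy
    exact ⟨p + p', by simp [add_mul, Finset.sum_add_distrib]⟩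
  | smul c x _ hx =>
    obtain ⟨p, rfl⟩ := hx
    exact ⟨c • p, by simp [Finset.smul_sum]⟩
  | mem x hx =>
    obtain ⟨⟨s, e⟩, rfl⟩ := hx
    classical
    refine ⟨Pi.single e (monomial s 1), ?_⟩
    simp only
    rw [Finset.sum_eq_single e]
    · simp
    · intro b _ hb; rw [Pi.single_eq_of_ne hb]; simp
    · simp

end spanning

open MvPolynomial Matrix

section leading
set_option linter.unusedSectionVars false
open scoped MonomialOrder

variable (F : Type) [Field F] [Fintype F] (n : ℕ)

theorem LM_indep {σ ι : Type*} (m : MonomialOrder σ) (v : ι → MvPolynomial σ F)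
    (hv : ∀ i, v i ≠ 0) (hinj : Function.Injective fun i => m.degree (v i)) :
    LinearIndependent F v := by
  classical
  rw [linearIndependent_iff']
  intro s g hs i hi
  by_contra hne
  obtain ⟨i0, hi0, hmax⟩ := Finset.exists_max_image (s.filter fun i => g i ≠ 0)
    (fun i => m.toSyn (m.degree (v i))) ⟨i, by simp [hi, hne]⟩
  rw [Finset.mem_filter] at hi0
  have h1 := congrArg (coeff (m.degree (v i0))) hs
  rw [coeff_sum, Finset.sum_eq_single i0] at h1
  · rw [coeff_smul, coeff_zero, smul_eq_mul, mul_eq_zero] at h1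
    rcases h1 with h1 | h1
    · exact hi0.2 h1
    · exact hv i0 (m.coeff_degree_eq_zero_iff.mp h1)
  · intro j hj hji
    rw [coeff_smul]
    by_cases hg : g j = 0
    · simp [hg]
    · rw [m.coeff_eq_zero_of_lt, smul_zero]
      have h2 := hmax j (by simp [hj, hg])
      refine lt_of_le_of_ne h2 fun h3 => hji ?_
      exact hinj (m.toSyn.injective h3)
  · intro h; exact absurd hi0.1 h

theorem LM_main {σ τ ι : Type*} [Fintype ι] (m : MonomialOrder σ) (g : τ → MvPolynomial σ F)
    (hg : ∀ i, g i ≠ 0) (v : ι → MvPolynomial σ F) (hv : ∀ i, v i ≠ 0)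
    (hinj : Function.Injective fun p : (τ →₀ ℕ) × ι =>
      (p.1.sum fun i a => a • m.degree (g i)) + m.degree (v p.2))
    (p : ι → MvPolynomial τ F) (hp : ∑ e, aeval g (p e) * v e = 0) : ∀ e, p e = 0 := by
  classical
  have hm : ∀ s : τ →₀ ℕ, aeval (R := F) g (monomial s 1) = s.prod fun i a => g i ^ a := by
    intro s; rw [aeval_monomial, map_one, one_mul]
  have hm0 : ∀ s : τ →₀ ℕ, aeval (R := F) g (monomial s 1) ≠ 0 := by
    intro s; rw [hm, Finsupp.prod]
    exact Finset.prod_ne_zero_iff.mpr fun i _ => pow_ne_zero _ (hg i)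
  have hmd : ∀ s : τ →₀ ℕ, m.degree (aeval (R := F) g (monomial s 1)) =
      s.sum fun i a => a • m.degree (g i) := by
    intro s; rw [hm, Finsupp.prod, m.degree_prod fun i _ => pow_ne_zero _ (hg i), Finsupp.sum]
    exact Finset.sum_congr rfl fun i _ => m.degree_pow _ _
  have hli := LM_indep F m (fun p : (τ →₀ ℕ) × ι => aeval g (monomial p.1 (1 : F)) * v p.2)
    (fun p => mul_ne_zero (hm0 _) (hv _)) (by
      intro p p' h
      apply hinj
      simp only at h ⊢
      rw [m.degree_mul (hm0 _) (hv _), m.degree_mul (hm0 _) (hv _), hmd, hmd] at h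
      exact h)
  set S := Finset.univ.biUnion fun e => (p e).support
  rw [linearIndependent_iff'] at hli
  have h1 := hli (S ×ˢ Finset.univ) (fun x => coeff x.1 (p x.2)) (by
    rw [Finset.sum_product_right, ← hp]
    apply Finset.sum_congr rfl
    intro e _
    simp only
    have h2 : p e = ∑ s ∈ S, coeff s (p e) • monomial s (1 : F) := by
      conv_lhs => rw [(p e).as_sum]
      rw [Finset.sum_subset (Finset.subset_biUnion_of_mem (fun e => (p e).support) (Finset.mem_univ e))]
      · apply Finset.sum_congr rfl
        intro s _
        rw [smul_monomial, smul_eq_mul, mul_one]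
      · intro s _ hs
        rw [notMem_support_iff.mp hs, monomial_zero]
    conv_rhs => rw [h2, map_sum, Finset.sum_mul]
    apply Finset.sum_congr rfl
    intro s _
    rw [map_smul, smul_mul_assoc])
  intro e
  ext s
  by_cases hs : s ∈ (p e).support
  · exact h1 (s, e) (by simp only [Finset.mem_product, Finset.mem_univ, and_true]
                        exact Finset.mem_biUnion.mpr ⟨e, Finset.mem_univ _, hs⟩)
  · simpa using hs

theorem LM_inj {σ τ : Type*} (m : MonomialOrder σ) (g : τ → MvPolynomial σ F)
    (hg : ∀ i, g i ≠ 0)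
    (hinj : Function.Injective fun p : (τ →₀ ℕ) => (p.sum fun i a => a • m.degree (g i))) :
    Function.Injective (aeval (R := F) g) := by
  rw [injective_iff_map_eq_zero]
  intro p hp
  refine LM_main F m g hg (fun _ : Unit => 1) (by simp) ?_ (fun _ => p) (by simpa using hp) ()
  rintro ⟨a, _⟩ ⟨b, _⟩ h
  simp only [MonomialOrder.degree_one, add_zero] at h
  rw [hinj h]

/-- key for the variable order -/
def vkey : Fin n ⊕ Fin n → ℕ := Sum.elim (fun i => 2 * n - i) (fun i => i)

theorem vkey_inj : Function.Injective (vkey n) := by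
  rintro (i | i) (j | j) h <;> simp only [vkey, Sum.elim_inl, Sum.elim_inr] at h
  · congr 1; ext; omega
  · omega
  · omega
  · congr 1; ext; omega

noncomputable def lexOf {σ : Type*} [Finite σ] (k : σ → ℕ) (hk : Function.Injective k) :
    MonomialOrder σ :=
  letI := LinearOrder.lift' k hk
  MonomialOrder.lex

theorem lexOf_lt {σ : Type*} [Finite σ] (k : σ → ℕ) (hk : Function.Injective k) {d e : σ →₀ ℕ}
    (a : σ) (h : ∀ c, k c < k a → d c = e c) (ha : d a < e a) :
    d ≺[lexOf k hk] e := by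
  let _ := LinearOrder.lift' k hk
  change toLex d < toLex e
  refine ⟨a, fun c hc => ?_, ha⟩
  exact h c hc

noncomputable def mo : MonomialOrder (Fin n ⊕ Fin n) := lexOf (vkey n) (vkey_inj n)

theorem mo_lt {d e : (Fin n ⊕ Fin n) →₀ ℕ} (a : Fin n ⊕ Fin n)
    (h : ∀ c, vkey n c < vkey n a → d c = e c) (ha : d a < e a) :
    d ≺[mo n] e := lexOf_lt _ _ a h ha

theorem deg_X (a : Fin n ⊕ Fin n) : (mo n).degree (X a : MvPolynomial _ F) = Finsupp.single a 1 :=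
  MonomialOrder.degree_X

/-- leading exponents of linearised products. -/
theorem DL_deg (z : ℕ → MvPolynomial (Fin n ⊕ Fin n) F) (w : ℕ → Fin n ⊕ Fin n) (N : ℕ)
    (hz : ∀ i < N, z i = X (w i)) (hw : ∀ i j, i < j → j < N → vkey n (w j) < vkey n (w i))
    (s : ℕ) : ∀ i, s ≤ i → i < N → (mo n).degree (DL (F := F) z s (z i)) =
      Finsupp.single (w i) ((Fintype.card F) ^ s) := by
  induction s with
  | zero => intro i _ hi; rw [DL_zero, hz i hi, deg_X, pow_zero]
  | succ s ih =>
    intro i hsi hi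
    have hne : ∀ i, s ≤ i → i < N → DL (F := F) z s (z i) ≠ 0 := by
      intro i h1 h2
      apply (mo n).ne_zero_of_degree_ne_zero
      rw [ih i h1 h2]
      have := pow_pos (q_pos F) s
      rw [Finsupp.single_ne_zero]
      omega
    have h1 : (mo n).degree (DL (F := F) z s (z i) ^ Fintype.card F) =
        Finsupp.single (w i) ((Fintype.card F) ^ (s + 1)) := by
      rw [MonomialOrder.degree_pow, ih i (by omega) hi, Finsupp.smul_single, smul_eq_mul, pow_succ']
    rw [DL_succ, MonomialOrder.degree_sub_of_lt, h1]
    rw [h1, MonomialOrder.degree_mul (pow_ne_zero _ (hne s le_rfl (by omega))) (hne i (by omega) hi),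
      MonomialOrder.degree_pow, ih i (by omega) hi, ih s le_rfl (by omega)]
    have hk := hw s i (by omega) hi
    have hne2 : w s ≠ w i := by intro h; rw [h] at hk; exact lt_irrefl _ hk
    refine mo_lt n (w i) ?_ ?_
    · intro c hc
      have hc1 : w i ≠ c := by rintro rfl; exact lt_irrefl _ hc
      have hc2 : w s ≠ c := by rintro rfl; omega
      simp [hc1, hc2]
    · simp [hne2]
      exact Nat.pow_lt_pow_right (one_lt_q F) (by omega)

theorem fx_deg (i : Fin n) : (mo n).degree (fx F n i) =
    Finsupp.single (Sum.inl i) ((Fintype.card F) ^ (i : ℕ)) := by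
  have := DL_deg F n (xs F n) (fun j => if h : j < n then Sum.inl ⟨j, h⟩ else Sum.inl i) n
    (by intro i hi; simp [xs, hi]) (by
      intro i j hij hj
      have hi : i < n := by omega
      simp only [hi, hj, dif_pos, vkey, Sum.elim_inl]; omega) i i le_rfl i.2
  simpa [fx] using this

theorem fy_deg (i : Fin n) : (mo n).degree (fy F n i) =
    Finsupp.single (Sum.inr ⟨n - 1 - i, by omega⟩) ((Fintype.card F) ^ (i : ℕ)) := by
  have := DL_deg F n (ys F n) (fun j => if h : j < n then Sum.inr ⟨n - 1 - j, by omega⟩ else Sum.inl i) n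
    (by intro i hi; simp [ys, hi]) (by
      intro i j hij hj
      have hi : i < n := by omega
      simp only [hi, hj, dif_pos, vkey, Sum.elim_inr]; omega) i i le_rfl i.2
  simpa [fy] using this

theorem fx_ne_zero {i : ℕ} (h : i < n) : fx F n i ≠ 0 := by
  apply (mo n).ne_zero_of_degree_ne_zero
  rw [fx_deg F n ⟨i, h⟩, Finsupp.single_ne_zero]
  exact pow_ne_zero _ (q_pos F).ne'

theorem fy_ne_zero {i : ℕ} (h : i < n) : fy F n i ≠ 0 := by
  apply (mo n).ne_zero_of_degree_ne_zero
  rw [fy_deg F n ⟨i, h⟩, Finsupp.single_ne_zero]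
  exact pow_ne_zero _ (q_pos F).ne'

end leading

open MvPolynomial Matrix

section indep
set_option linter.unusedSectionVars false
open scoped MonomialOrder

variable (F : Type) [Field F] [Fintype F] (n m : ℕ)

/-- reordering of variables -/
def wv : Fin m ⊕ Fin m → Fin m ⊕ Fin m := Sum.elim Sum.inl (fun i => Sum.inr ⟨m - 1 - i, by omega⟩)
theorem wv_inj : Function.Injective (wv m) := by
  rintro (i | i) (j | j) h <;>
    simp only [wv, Sum.elim_inl, Sum.elim_inr, Sum.inl.injEq, Sum.inr.injEq, reduceCtorEq, Fin.mk.injEq] at h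
  · rw [h]
  · congr 1; ext; omega

def rv : Fin m ⊕ Fin m → ℕ := Sum.elim (fun i => i + 1) (fun i => i)

noncomputable def gpsi : Fin m ⊕ Fin m → MvPolynomial (Fin m ⊕ Fin m) F :=
  Sum.elim (fun i => fx F m i ^ Fintype.card F) (fun i => fy F m i)

noncomputable def psi : MvPolynomial (Fin m ⊕ Fin m) F →ₐ[F] MvPolynomial (Fin m ⊕ Fin m) F :=
  aeval (gpsi F m)

theorem gpsi_ne (c) : gpsi F m c ≠ 0 := by
  rcases c with i | i
  · exact pow_ne_zero _ (fx_ne_zero F m i.2)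
  · exact fy_ne_zero F m i.2

theorem gpsi_deg (c) : (mo m).degree (gpsi F m c) =
    Finsupp.single (wv m c) ((Fintype.card F) ^ (rv m c)) := by
  rcases c with i | i
  · simp only [gpsi, Sum.elim_inl, wv, rv, MonomialOrder.degree_pow, fx_deg, Finsupp.smul_single,
      smul_eq_mul, pow_succ']
  · simp only [gpsi, Sum.elim_inr, wv, rv, fy_deg]

abbrev Didx : Type := (c : Fin m ⊕ Fin m) → Fin ((Fintype.card F) ^ (rv m c))

noncomputable def vpsi (d : Didx F m) : MvPolynomial (Fin m ⊕ Fin m) F :=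
  ∏ c, X (wv m c) ^ (d c : ℕ)

theorem vpsi_ne (d) : vpsi F m d ≠ 0 :=
  Finset.prod_ne_zero_iff.mpr fun _ _ => pow_ne_zero _ (X_ne_zero _)

theorem vpsi_deg (d) : (mo m).degree (vpsi F m d) = ∑ c, Finsupp.single (wv m c) (d c : ℕ) := by
  rw [vpsi, MonomialOrder.degree_prod fun _ _ => pow_ne_zero _ (X_ne_zero _)]
  apply Finset.sum_congr rfl
  intro c _
  rw [MonomialOrder.degree_pow, deg_X, Finsupp.smul_single, smul_eq_mul, mul_one]

theorem psi_indep (p : Didx F m → MvPolynomial (Fin m ⊕ Fin m) F)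
    (hp : ∑ d, psi F m (p d) * vpsi F m d = 0) : ∀ d, p d = 0 := by
  classical
  refine LM_main F (mo m) (gpsi F m) (gpsi_ne F m) (vpsi F m) (vpsi_ne F m) ?_ p hp
  rintro ⟨s, d⟩ ⟨s', d'⟩ h
  simp only [gpsi_deg, vpsi_deg] at h
  rw [Finsupp.sum_fintype _ _ (by simp), Finsupp.sum_fintype _ _ (by simp)] at h
  have h1 : ∀ c, s c * (Fintype.card F) ^ (rv m c) + (d c : ℕ) =
      s' c * (Fintype.card F) ^ (rv m c) + (d' c : ℕ) := by
    intro c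
    have := DFunLike.congr_fun h (wv m c)
    simpa [-Fintype.sum_sum_type, Finsupp.single_apply, (wv_inj m).eq_iff] using this
  have h2 : ∀ c, s c = s' c ∧ (d c : ℕ) = d' c := by
    intro c
    have hpos : 0 < (Fintype.card F) ^ (rv m c) := pow_pos (q_pos F) _
    have e1 := congrArg (· / (Fintype.card F) ^ (rv m c)) (h1 c)
    have e2 := congrArg (· % (Fintype.card F) ^ (rv m c)) (h1 c)
    simp only [mul_comm (s c), mul_comm (s' c), Nat.mul_add_div hpos, Nat.mul_add_mod,
      Nat.div_eq_of_lt (d c).2, Nat.div_eq_of_lt (d' c).2, Nat.mod_eq_of_lt (d c).2,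
      Nat.mod_eq_of_lt (d' c).2, add_zero] at e1 e2
    exact ⟨e1, e2⟩
  congr 1
  · ext c; exact (h2 c).1
  · ext c; exact (h2 c).2

theorem psi_inj : Function.Injective (psi F m) := by
  rw [injective_iff_map_eq_zero]
  intro p hp
  classical
  have d0 : Didx F m := fun c => ⟨0, pow_pos (q_pos F) _⟩
  have := psi_indep F m (Pi.single d0 p) (by
    apply Finset.sum_eq_zero
    intro d _
    by_cases h : d = d0
    · subst h; simp [hp]
    · simp [Pi.single_eq_of_ne h]) d0
  simpa using this

noncomputable def gtheta : Fin m ⊕ Fin m → MvPolynomial (Fin (m + 1) ⊕ Fin (m + 1)) F :=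
  Sum.elim (fun i => X (Sum.inl i.succ) ^ Fintype.card F -
      X (Sum.inl 0) ^ (Fintype.card F - 1) * X (Sum.inl i.succ)) (fun i => X (Sum.inr i.succ))

noncomputable def theta :
    MvPolynomial (Fin m ⊕ Fin m) F →ₐ[F] MvPolynomial (Fin (m + 1) ⊕ Fin (m + 1)) F :=
  aeval (gtheta F m)

def wt : Fin m ⊕ Fin m → Fin (m + 1) ⊕ Fin (m + 1) := Sum.map Fin.succ Fin.succ
def rt : Fin m ⊕ Fin m → ℕ := Sum.elim (fun _ => Fintype.card F) (fun _ => 1)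

theorem gtheta_deg (c) : (mo (m + 1)).degree (gtheta F m c) = Finsupp.single (wt m c) (rt F m c) := by
  rcases c with i | i
  · have h1 : (mo (m+1)).degree (X (Sum.inl i.succ) ^ Fintype.card F :
        MvPolynomial (Fin (m + 1) ⊕ Fin (m + 1)) F) = Finsupp.single (Sum.inl i.succ) (Fintype.card F) := by
      rw [MonomialOrder.degree_pow, deg_X, Finsupp.smul_single, smul_eq_mul, mul_one]
    simp only [gtheta, Sum.elim_inl, wt, rt, Sum.map_inl]
    rw [MonomialOrder.degree_sub_of_lt, h1]
    rw [h1, MonomialOrder.degree_mul (pow_ne_zero _ (X_ne_zero _)) (X_ne_zero _),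
      MonomialOrder.degree_pow, deg_X, deg_X]
    refine mo_lt _ (Sum.inl i.succ) ?_ ?_
    · intro c hc
      have hc1 : Sum.inl i.succ ≠ c := by rintro rfl; exact lt_irrefl _ hc
      have hc2 : Sum.inl 0 ≠ c := by
        rintro rfl
        simp [vkey] at hc; omega
      simp [hc1, hc2]
    · simp [one_lt_q F]
  · simp only [gtheta, Sum.elim_inr, wt, rt, Sum.map_inr, deg_X]

theorem gtheta_ne (c) : gtheta F m c ≠ 0 := by
  apply (mo _).ne_zero_of_degree_ne_zero
  rw [gtheta_deg, Finsupp.single_ne_zero]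
  rcases c with i | i
  · exact (q_pos F).ne'
  · exact one_ne_zero

theorem u0_deg : (mo (m + 1)).degree (uInv F (m + 1) 0) =
    Finsupp.single (Sum.inl 0) 1 + Finsupp.single (Sum.inr 0) 1 := by
  have h0 : (mo (m + 1)).degree (X (Sum.inl 0) * X (Sum.inr 0) : MvPolynomial (Fin (m + 1) ⊕ Fin (m + 1)) F)
    = Finsupp.single (Sum.inl 0) 1 + Finsupp.single (Sum.inr 0) 1 := by
    rw [MonomialOrder.degree_mul (X_ne_zero _) (X_ne_zero _), deg_X, deg_X]
  have : uInv F (m + 1) 0 = X (Sum.inl 0) * X (Sum.inr 0) +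
      ∑ k : Fin m, X (Sum.inl k.succ) * X (Sum.inr k.succ) := by
    simp [uInv, Fin.sum_univ_succ]
  rw [this, MonomialOrder.degree_add_of_lt, h0]
  rw [h0]
  refine lt_of_le_of_lt (MonomialOrder.degree_sum_le) ?_
  rw [Finset.sup_lt_iff]
  · intro k _
    rw [MonomialOrder.degree_mul (X_ne_zero _) (X_ne_zero _), deg_X, deg_X]
    refine mo_lt _ (Sum.inr 0) ?_ ?_
    · intro c hc; simp [vkey] at hc
    · simp
  · rw [MonomialOrder.bot_eq_zero, ← map_zero (mo (m+1)).toSyn]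
    refine mo_lt _ (Sum.inr 0) ?_ ?_
    · intro c hc; simp [vkey] at hc
    · simp

theorem u0_ne : uInv F (m + 1) 0 ≠ 0 := by
  apply (mo _).ne_zero_of_degree_ne_zero
  rw [u0_deg]
  intro h
  have := DFunLike.congr_fun h (Sum.inl 0)
  simp at this

theorem theta_indep (M : ℕ) (p : Fin M × Fin M → MvPolynomial (Fin m ⊕ Fin m) F)
    (hp : ∑ e : Fin M × Fin M, theta F m (p e) *
      (X (Sum.inl 0) ^ (e.1 : ℕ) * uInv F (m + 1) 0 ^ (e.2 : ℕ)) = 0) : ∀ e, p e = 0 := by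
  classical
  refine LM_main F (mo (m+1)) (gtheta F m) (gtheta_ne F m)
    (fun e : Fin M × Fin M => X (Sum.inl 0) ^ (e.1 : ℕ) * uInv F (m + 1) 0 ^ (e.2 : ℕ))
    (fun e => mul_ne_zero (pow_ne_zero _ (X_ne_zero _)) (pow_ne_zero _ (u0_ne F m))) ?_ p hp
  rintro ⟨s, d⟩ ⟨s', d'⟩ h
  simp only [gtheta_deg] at h
  rw [Finsupp.sum_fintype _ _ (by simp), Finsupp.sum_fintype _ _ (by simp)] at h
  have hd : ∀ d : Fin M × Fin M, (mo (m+1)).degree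
      (X (Sum.inl 0) ^ (d.1 : ℕ) * uInv F (m + 1) 0 ^ (d.2 : ℕ)) =
      (d.1 : ℕ) • Finsupp.single (Sum.inl 0) 1 +
        (d.2 : ℕ) • (Finsupp.single (Sum.inl 0) 1 + Finsupp.single (Sum.inr 0) 1) := by
    intro d
    rw [MonomialOrder.degree_mul (pow_ne_zero _ (X_ne_zero _)) (pow_ne_zero _ (u0_ne F m)),
      MonomialOrder.degree_pow, MonomialOrder.degree_pow, u0_deg, deg_X]
  rw [hd, hd] at h
  have a1 := DFunLike.congr_fun h (Sum.inl 0)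
  have a2 := DFunLike.congr_fun h (Sum.inr 0)
  have a3 : ∀ i : Fin m, s (Sum.inl i) = s' (Sum.inl i) := by
    intro i
    have := DFunLike.congr_fun h (Sum.inl i.succ)
    simpa [Finsupp.single_apply, wt, rt, (q_pos F).ne', (Fin.succ_ne_zero i).symm] using this
  have a4 : ∀ i : Fin m, s (Sum.inr i) = s' (Sum.inr i) := by
    intro i
    have := DFunLike.congr_fun h (Sum.inr i.succ)
    simpa [Finsupp.single_apply, wt, rt, (q_pos F).ne', (Fin.succ_ne_zero i).symm] using this
  simp [wt] at a1 a2
  rw [a2] at a1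
  have a5 : (d.1 : ℕ) = d'.1 := by omega
  congr 1
  · ext c; rcases c with i | i
    · exact a3 i
    · exact a4 i
  · exact Prod.ext (Fin.ext a5) (Fin.ext (by exact_mod_cast a2))

end indep

open MvPolynomial Matrix

section fieldcount
set_option linter.unusedSectionVars false

theorem inv_mem_of_le_span {k L : Type*} [Field k] [Field L] [Algebra k L] {E : Type*} [Finite E]
    (u : E → L) (A : Subalgebra k L) (hA : Subalgebra.toSubmodule A ≤ Submodule.span k (Set.range u)) :
    ∀ x ∈ A, x⁻¹ ∈ A := by
  intro x hx
  have : FiniteDimensional k (Submodule.span k (Set.range u)) :=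
    FiniteDimensional.span_of_finite k (Set.finite_range u)
  have : FiniteDimensional k (Subalgebra.toSubmodule A) :=
    Submodule.finiteDimensional_of_le hA
  have : FiniteDimensional k A := this
  have h1 : IsAlgebraic k (⟨x, hx⟩ : A) := Algebra.IsAlgebraic.isAlgebraic _
  have h2 : IsAlgebraic k x := h1.algebraMap (A := L)
  exact A.inv_mem_of_algebraic (x := ⟨x, hx⟩) h2

theorem dimcount {k L : Type*} [Field k] [Field L] [Algebra k L] {E D W : Type*}
    [Fintype E] [Fintype D] [Fintype W] (u : E → L) (v : D → L) (w : W → L)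
    (hone : 1 ∈ Submodule.span k (Set.range u))
    (hmul : ∀ e e', u e * u e' ∈ Submodule.span k (Set.range u))
    (hv : LinearIndependent k v)
    (hw : ∀ K : IntermediateField k L, Submodule.span k (Set.range u) ≤ Subalgebra.toSubmodule K.toSubalgebra →
      ∀ x : L, x ∈ Submodule.span K (Set.range w))
    (hcard : Fintype.card E * Fintype.card W ≤ Fintype.card D) (hW : 0 < Fintype.card W) :
    LinearIndependent k u := by
  let A : Subalgebra k L := Submodule.toSubalgebra (Submodule.span k (Set.range u)) hone (by
    intro x y hx hy
    have : x * y ∈ Submodule.span k (Set.range u) * Submodule.span k (Set.range u) :=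
      Submodule.mul_mem_mul hx hy
    rw [Submodule.span_mul_span] at this
    refine (Submodule.span_le.mpr ?_) this
    rintro _ ⟨_, ⟨e, rfl⟩, _, ⟨e', rfl⟩, rfl⟩
    exact hmul e e')
  have hA : Subalgebra.toSubmodule A = Submodule.span k (Set.range u) := by
    ext x; rfl
  let K : IntermediateField k L := A.toIntermediateField (inv_mem_of_le_span u A hA.le)
  have hK := hw K hA.ge
  have : FiniteDimensional k (Submodule.span k (Set.range u)) :=
    FiniteDimensional.span_of_finite k (Set.finite_range u)
  have h3 : FiniteDimensional k (Subalgebra.toSubmodule A) := by rw [hA]; infer_instance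
  have : FiniteDimensional k K := h3
  have htop : Submodule.span K (Set.range w) = ⊤ := by
    rw [eq_top_iff]; intro x _; exact hK x
  have : FiniteDimensional K L := by
    refine ⟨?_⟩
    rw [← htop]
    exact Submodule.fg_span (Set.finite_range w)
  have h4 : Module.finrank K L ≤ Fintype.card W := by
    have := finrank_range_le_card (R := K) w
    rw [Set.finrank, htop, finrank_top] at this
    exact this
  have : FiniteDimensional k L := FiniteDimensional.trans k K L
  have h5 := hv.fintype_card_le_finrank
  rw [← Module.finrank_mul_finrank k K L] at h5
  have h6 : Module.finrank k K = (Set.range u).finrank k := by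
    have : Module.finrank k K = Module.finrank k (Subalgebra.toSubmodule A) := rfl
    rw [this, hA]; rfl
  rw [linearIndependent_iff_card_le_finrank_span, ← h6]
  have h7 : Fintype.card E * Fintype.card W ≤ Module.finrank k K * Fintype.card W :=
    hcard.trans (h5.trans (Nat.mul_le_mul_left _ h4))
  exact Nat.le_of_mul_le_mul_right h7 hW

theorem span_box {K L : Type*} [CommRing K] [CommRing L] [Algebra K L] {m : ℕ} (x : Fin m → L)
    (N : Fin m → ℕ) (hN : ∀ i, 0 < N i)
    (h : ∀ i, x i ^ N i ∈ Submodule.span K (Set.range fun d : Fin (N i) => x i ^ (d : ℕ))) :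
    ∀ a ∈ Algebra.adjoin K (Set.range x), a ∈ Submodule.span K
      (Set.range fun d : (i : Fin m) → Fin (N i) => ∏ i, x i ^ (d i : ℕ)) := by
  classical
  apply adjoin_le_of_mul_closed
  · apply Submodule.subset_span
    exact ⟨fun i => ⟨0, hN i⟩, by simp⟩
  · rintro _ ⟨i, rfl⟩ a ha
    induction ha using Submodule.span_induction with
    | zero => simp
    | add x y _ _ hx hy => rw [mul_add]; exact Submodule.add_mem _ hx hy
    | smul a x _ hx => rw [mul_smul_comm]; exact Submodule.smul_mem _ _ hx
    | mem y hy =>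
      obtain ⟨d, rfl⟩ := hy
      simp only
      have key : ∀ c : Fin (N i), x i ^ (c : ℕ) * ∏ j ∈ Finset.univ.erase i, x j ^ (d j : ℕ) =
          ∏ j, x j ^ (Function.update d i c j : ℕ) := by
        intro c
        rw [← Finset.mul_prod_erase Finset.univ _ (Finset.mem_univ i)]
        congr 1
        · simp
        · apply Finset.prod_congr rfl
          intro j hj
          rw [Function.update_of_ne (Finset.ne_of_mem_erase hj)]
      rw [← Finset.mul_prod_erase Finset.univ _ (Finset.mem_univ i), ← mul_assoc, ← pow_succ']
      by_cases hlt : (d i : ℕ) + 1 < N i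
      · apply Submodule.subset_span
        exact ⟨Function.update d i ⟨_, hlt⟩, (key ⟨_, hlt⟩).symm⟩
      · have h2 : (d i : ℕ) + 1 = N i := by have := (d i).2; omega
        rw [h2]
        have h3 := h i
        generalize x i ^ N i = b at h3
        induction h3 using Submodule.span_induction with
        | zero => simp
        | add x y _ _ hx hy => rw [add_mul]; exact Submodule.add_mem _ hx hy
        | smul a x _ hx => rw [smul_mul_assoc]; exact Submodule.smul_mem _ _ hx
        | mem y hy =>
          obtain ⟨c, rfl⟩ := hy
          simp only
          rw [key]
          exact Submodule.subset_span ⟨_, rfl⟩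

end fieldcount

section counting
variable (F : Type) [Field F] [Fintype F] (m : ℕ)

theorem sum_Icc_split (g : ℤ → ℕ) (m : ℕ) : ∑ j ∈ Finset.Icc (-(m : ℤ)) ((m : ℤ) - 1), g j =
    ∑ a ∈ Finset.range m, (g a + g (-((a : ℤ) + 1))) := by
  induction m with
  | zero => simp
  | succ m ih =>
    rw [Finset.sum_range_succ, ← ih]
    have : Finset.Icc (-((m + 1 : ℕ) : ℤ)) (((m + 1 : ℕ) : ℤ) - 1) =
        insert (m : ℤ) (insert (-((m : ℤ) + 1)) (Finset.Icc (-(m : ℤ)) ((m : ℤ) - 1))) := by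
      ext j; simp only [Finset.mem_Icc, Finset.mem_insert]; omega
    rw [this, Finset.sum_insert, Finset.sum_insert]
    · ring
    · simp
    · simp only [Finset.mem_insert, Finset.mem_Icc]; omega

theorem sum_aexp : ∑ j ∈ Finset.Icc (2 - ((m + 1 : ℕ) : ℤ)) (((m + 1 : ℕ) : ℤ) - 2), aexp (m + 1) j =
    ∑ i : Fin m, ((i : ℕ) + 1) := by
  have h1 := sum_Icc_split (aexp (m + 1)) m
  rw [← Finset.sum_subset (s₁ := Finset.Icc (2 - ((m + 1 : ℕ) : ℤ)) (((m + 1 : ℕ) : ℤ) - 2))] at h1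
  · rw [h1, ← Fin.sum_univ_eq_sum_range (fun a => aexp (m + 1) (a : ℤ) + aexp (m + 1) (-((a : ℤ) + 1))) m]
    rw [← Equiv.sum_comp Fin.revPerm]
    apply Finset.sum_congr rfl
    intro i _
    have := i.2
    simp only [Fin.revPerm_apply, Fin.val_rev, aexp]
    omega
  · intro j; simp only [Finset.mem_Icc]; omega
  · intro j _ hj
    exact aexp_zero _ hj

theorem card_count : Fintype.card (Eidx F (m + 1)) * Fintype.card ((i : Fin m) → Fin (Fintype.card F ^ (i : ℕ)))
    ≤ Fintype.card (Didx F m) := by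
  rw [Fintype.card_pi, Fintype.card_pi, Fintype.card_pi]
  simp only [Fintype.card_fin]
  rw [Finset.prod_pow_eq_pow_sum, Finset.prod_pow_eq_pow_sum, Finset.prod_pow_eq_pow_sum, ← pow_add]
  apply le_of_eq
  congr 1
  rw [Fintype.sum_sum_type]
  simp only [rv, Sum.elim_inl, Sum.elim_inr]
  rw [← sum_aexp, Finset.sum_coe_sort _ (aexp (m + 1))]

end counting

open MvPolynomial Matrix

section rho
set_option linter.unusedSectionVars false

variable (F : Type) [Field F] [Fintype F] (m : ℕ)

theorem DL_Bf_mem (n : ℕ) (KR : Subalgebra F (MvPolynomial (Fin n ⊕ Fin n) F))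
    (hu : ∀ j, uInv F n j ∈ KR) (s t : ℕ)
    (hx : ∀ i < s, fx F n i ∈ KR) (hy : ∀ i < t, fy F n i ∈ KR) :
    ∑ k : Fin n, DL (F := F) (xs F n) s (xs F n k) * DL (F := F) (ys F n) t (ys F n (n - 1 - k)) ∈ KR := by
  have hB : ∀ i j, Bf F n i j ∈ KR := fun i j => by rw [Bf_eq]; exact pow_mem (hu _) _
  obtain ⟨c, hc, hcx⟩ := DL_expand F (xs F n) (Subalgebra.toSubmodule KR)
    (fun a ha b hb => mul_mem (S := Subalgebra F _) ha hb) s hx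
  obtain ⟨d, hd, hdy⟩ := DL_expand F (ys F n) (Subalgebra.toSubmodule KR)
    (fun a ha b hb => mul_mem (S := Subalgebra F _) ha hb) t hy
  have h3 : ∑ k : Fin n, DL (F := F) (xs F n) s (xs F n k) * DL (F := F) (ys F n) t (ys F n (n - 1 - k))
      = Bf F n s t + ∑ i ∈ Finset.range s, c i * Bf F n i t + ∑ j ∈ Finset.range t, d j * Bf F n s j
        + ∑ i ∈ Finset.range s, ∑ j ∈ Finset.range t, c i * (d j * Bf F n i j) := by
    simp only [hcx, hdy, xs_fin, ys_fin, Bf, add_mul, mul_add, Finset.sum_add_distrib,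
      Finset.mul_sum, Finset.sum_mul]
    have e1 : ∀ (f : Fin n → ℕ → MvPolynomial (Fin n ⊕ Fin n) F) (s : Finset ℕ),
        ∑ k, ∑ i ∈ s, f k i = ∑ i ∈ s, ∑ k, f k i := fun f s => Finset.sum_comm
    simp only [e1]
    have e2 : ∀ (f : ℕ → ℕ → MvPolynomial (Fin n ⊕ Fin n) F),
        ∑ i ∈ Finset.range t, ∑ j ∈ Finset.range s, f i j =
          ∑ j ∈ Finset.range s, ∑ i ∈ Finset.range t, f i j := fun f => Finset.sum_comm
    rw [e2]
    simp only [mul_assoc, mul_left_comm (X (Sum.inl _) ^ _)]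
    ring
  rw [h3]
  have hc' : ∀ i, c i ∈ KR := hc
  have hd' : ∀ i, d i ∈ KR := hd
  refine add_mem (add_mem (add_mem (hB _ _) ?_) ?_) ?_
  · exact Subalgebra.sum_mem _ fun i _ => mul_mem (hc' i) (hB _ _)
  · exact Subalgebra.sum_mem _ fun i _ => mul_mem (hd' i) (hB _ _)
  · exact Subalgebra.sum_mem _ fun i _ => Subalgebra.sum_mem _ fun j _ =>
      mul_mem (hc' i) (mul_mem (hd' j) (hB _ _))

theorem fx_mem_of_div (n : ℕ) (KR : Subalgebra F (MvPolynomial (Fin n ⊕ Fin n) F))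
    (hu : ∀ j, uInv F n j ∈ KR) (hy : ∀ i, fy F n i ∈ KR)
    (hdiv : ∀ a b, a * b ∈ KR → b ∈ KR → b ≠ 0 → a ∈ KR) (s : ℕ) : fx F n s ∈ KR := by
  induction s using Nat.strong_induction_on with
  | _ s ih =>
    by_cases hs : s < n
    · have h1 := DL_Bf_mem F n KR hu s (n - 1 - s) ih (fun i _ => hy i)
      rw [DL_bilin F n s _ (by omega), if_pos (by omega)] at h1
      exact hdiv _ _ h1 (hy _) (fy_ne_zero F n (by omega))
    · rw [fx_ge F n (by omega)]; exact zero_mem _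

variable {R : Type*} [CommRing R] [Algebra F R] (ι : MvPolynomial (Fin m ⊕ Fin m) F →ₐ[F] R) (t : R)

/-- set `x_0 = 0`, `y_0 = t`, shift the others -/
noncomputable def rho : MvPolynomial (Fin (m + 1) ⊕ Fin (m + 1)) F →ₐ[F] R :=
  aeval (Sum.elim (Fin.cons 0 fun i => ι (X (Sum.inl i))) (Fin.cons t fun i => ι (X (Sum.inr i))))

theorem rho_xs_zero : rho F m ι t (xs F (m + 1) 0) = 0 := by
  simp [rho, xs]

theorem rho_xs_succ (i : ℕ) : rho F m ι t (xs F (m + 1) (i + 1)) = ι (xs F m i) := by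
  by_cases h : i < m
  · rw [xs, dif_pos (by omega), xs, dif_pos h, rho, aeval_X, Sum.elim_inl]
    exact Fin.cons_succ (α := fun _ => R) _ _ (⟨i, h⟩ : Fin m)
  · rw [xs_ge F _ (by omega), xs_ge F _ (by omega), map_zero, map_zero]

theorem rho_ys (i : ℕ) (h : i < m) : rho F m ι t (ys F (m + 1) i) = ι (ys F m i) := by
  rw [ys, dif_pos (by omega), ys, dif_pos h, rho, aeval_X, Sum.elim_inr]
  have : (⟨m + 1 - 1 - i, by omega⟩ : Fin (m + 1)) = Fin.succ ⟨m - 1 - i, by omega⟩ := by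
    ext; simp; omega
  rw [this, Fin.cons_succ]

theorem rho_ys_last : rho F m ι t (ys F (m + 1) m) = t := by
  rw [ys, dif_pos (by omega), rho, aeval_X, Sum.elim_inr]
  have : (⟨m + 1 - 1 - m, by omega⟩ : Fin (m + 1)) = 0 := by
    ext; simp
  rw [this, Fin.cons_zero]

theorem rho_fx_zero : rho F m ι t (fx F (m + 1) 0) = 0 := by
  rw [fx, DL_zero, rho_xs_zero]

theorem rho_fx_succ (i : ℕ) : rho F m ι t (fx F (m + 1) (i + 1)) = ι (fx F m i ^ Fintype.card F) := by
  rw [fx, DL_map, DL_shift_zero F _ (rho_xs_zero F m ι t), fx, map_pow, DL_map]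
  have : ((fun i => rho F m ι t (xs F (m + 1) i)) ∘ Nat.succ) = fun i => ι (xs F m i) := by
    ext i; exact rho_xs_succ F m ι t i
  congr 1
  rw [← rho_xs_succ F m ι t i]
  apply DL_congr
  intro j _
  exact rho_xs_succ F m ι t j

theorem rho_fy (i : ℕ) (h : i < m) : rho F m ι t (fy F (m + 1) i) = ι (fy F m i) := by
  rw [fy, DL_map, fy, DL_map, rho_ys F m ι t i h]
  apply DL_congr
  intro j hj
  exact rho_ys F m ι t j (by omega)

theorem rho_fy_last : rho F m ι t (fy F (m + 1) m) = DL (F := F) (fun i => ι (ys F m i)) m t := by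
  rw [fy, DL_map, rho_ys_last F m ι t]
  apply DL_congr
  intro j hj
  exact rho_ys F m ι t j (by omega)

theorem rho_u (j : ℤ) : rho F m ι t (uInv F (m + 1) j) = ι (uInv F m j) := by
  unfold uInv
  have hq : ∀ a : ℕ, Fintype.card F ^ a ≠ 0 := fun a => pow_ne_zero _ (q_pos F).ne'
  split_ifs
  · rw [Fin.sum_univ_succ]
    simp [rho, zero_pow (hq _)]
  · rw [Fin.sum_univ_succ]
    simp [rho]

theorem rho_uE (n : ℕ) (e) : rho F m ι t (uE F n (uInv F (m + 1)) e) = ι (uE F n (uInv F m) e) := by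
  simp only [uE, map_prod, map_pow, rho_u]

/-- the map on polynomial relations -/
noncomputable def kap : MvPolynomial (Fin (m + 1) ⊕ Fin (m + 1)) F →ₐ[F]
    Polynomial (MvPolynomial (Fin m ⊕ Fin m) F) :=
  aeval (Sum.elim (Fin.cons 0 fun i => Polynomial.C (X (Sum.inl i)))
    (Fin.snoc (α := fun _ => Polynomial (MvPolynomial (Fin m ⊕ Fin m) F))
      (fun i => Polynomial.C (X (Sum.inr i))) Polynomial.X))

theorem rho_phi (p) : rho F m ι t (phi F (m + 1) p) =
    Polynomial.eval₂ (ι.comp (psi F m)).toRingHom (rho F m ι t (fy F (m + 1) m)) (kap F m p) := by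
  have : ((rho F m ι t).comp (phi F (m + 1))).toRingHom =
      (Polynomial.eval₂RingHom (ι.comp (psi F m)).toRingHom (rho F m ι t (fy F (m + 1) m))).comp
        (kap F m).toRingHom := by
    apply MvPolynomial.ringHom_ext
    · intro r
      simp only [RingHom.comp_apply, AlgHom.toRingHom_eq_coe, RingHom.coe_coe, AlgHom.comp_apply]
      rw [show (C r : MvPolynomial (Fin (m + 1) ⊕ Fin (m + 1)) F) = algebraMap F _ r from rfl]
      simp [Polynomial.algebraMap_apply]
    · rintro (i | i)
      · simp only [RingHom.comp_apply, AlgHom.toRingHom_eq_coe, RingHom.coe_coe, AlgHom.comp_apply, phi, kap, aeval_X, Sum.elim_inl]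
        refine Fin.cases ?_ (fun i => ?_) i
        · simp only [Fin.val_zero, rho_fx_zero, Fin.cons_zero, map_zero]
        · simp only [Fin.val_succ, rho_fx_succ, Fin.cons_succ, Polynomial.coe_eval₂RingHom,
            Polynomial.eval₂_C, RingHom.comp_apply, AlgHom.toRingHom_eq_coe, RingHom.coe_coe, AlgHom.comp_apply, psi, aeval_X, gpsi, Sum.elim_inl]
      · simp only [RingHom.comp_apply, AlgHom.toRingHom_eq_coe, RingHom.coe_coe, AlgHom.comp_apply, phi, kap, aeval_X, Sum.elim_inr]
        refine Fin.lastCases ?_ (fun i => ?_) i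
        · simp
        · simp only [Fin.val_castSucc, rho_fy F m ι t i i.2, Fin.snoc_castSucc, Polynomial.coe_eval₂RingHom,
            Polynomial.eval₂_C, RingHom.comp_apply, AlgHom.toRingHom_eq_coe, RingHom.coe_coe, AlgHom.comp_apply, psi, aeval_X, gpsi, Sum.elim_inr]
  exact DFunLike.congr_fun this p

theorem pi_A (a) (ha : a ∈ Aal F (m + 1)) : ∃ p : Eidx F (m + 1) → MvPolynomial (Fin m ⊕ Fin m) F,
    rho F m (AlgHom.id F _) 0 a = ∑ e, psi F m (p e) * uE F (m + 1) (uInv F m) e := by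
  obtain ⟨p, rfl⟩ := A_span F (m + 1) a ha
  refine ⟨fun e => (kap F m (p e)).coeff 0, ?_⟩
  rw [map_sum]
  apply Finset.sum_congr rfl
  intro e _
  rw [map_mul, rho_phi, rho_uE, rho_fy_last, map_zero, Polynomial.eval₂_at_zero]
  rfl

end rho

open MvPolynomial Matrix

section keyindep
set_option linter.unusedSectionVars false

variable (F : Type) [Field F] [Fintype F] (m : ℕ)

/-- the fraction field is spanned by the reduced monomials in the `x_i` over suitable subfields -/
theorem frac_span {k L : Type*} [Field k] [Field L] [Algebra k L]
    [Algebra (MvPolynomial (Fin m ⊕ Fin m) F) L] [IsFractionRing (MvPolynomial (Fin m ⊕ Fin m) F) L]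
    [Algebra F k] [Algebra F L] [IsScalarTower F k L] [IsScalarTower F (MvPolynomial (Fin m ⊕ Fin m) F) L]
    (K : IntermediateField k L)
    (hu : ∀ j, algebraMap _ L (uInv F m j) ∈ K) (hy : ∀ i, algebraMap _ L (fy F m i) ∈ K) :
    ∀ x : L, x ∈ Submodule.span K (Set.range fun d : (i : Fin m) → Fin (Fintype.card F ^ (i : ℕ)) =>
      ∏ i, (algebraMap _ L (X (Sum.inl i) : MvPolynomial (Fin m ⊕ Fin m) F)) ^ (d i : ℕ)) := by
  set al : MvPolynomial (Fin m ⊕ Fin m) F →ₐ[F] L := IsScalarTower.toAlgHom F _ L with hal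
  have hal' : ∀ a, algebraMap (MvPolynomial (Fin m ⊕ Fin m) F) L a = al a := fun a => rfl
  have halinj : Function.Injective al := IsFractionRing.injective (MvPolynomial (Fin m ⊕ Fin m) F) L
  simp only [hal'] at *
  let KR : Subalgebra F (MvPolynomial (Fin m ⊕ Fin m) F) := (K.toSubalgebra.restrictScalars F).comap al
  have hKR : ∀ a, a ∈ KR ↔ al a ∈ K := fun a => Iff.rfl
  have hfx : ∀ s, fx F m s ∈ KR := by
    apply fx_mem_of_div F m KR hu hy
    intro a b hab hb hb0
    rw [hKR] at *
    have : al a = al (a * b) / al b := by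
      rw [map_mul, mul_div_cancel_right₀]
      rwa [Ne, map_eq_zero_iff al halinj]
    rw [this]
    exact div_mem hab hb
  set x : Fin m → L := fun i => al (X (Sum.inl i)) with hx
  have hbox := span_box (K := K) x (fun i => Fintype.card F ^ (i : ℕ)) (fun i => pow_pos (q_pos F) _) (by
    intro i
    obtain ⟨c, hc, hcx⟩ := DL_expand F (xs F m) (Subalgebra.toSubmodule KR)
      (fun a ha b hb => mul_mem (S := Subalgebra F _) ha hb) i (fun i _ => hfx i)
    have h1 := congrArg al (hcx (xs F m i))
    change al (fx F m i) = _ at h1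
    rw [map_add, map_pow, map_sum, xs_fin] at h1
    have h2 : x i ^ Fintype.card F ^ (i : ℕ) = al (fx F m i) * x i ^ 0 -
        ∑ j ∈ Finset.range i, al (c j) * x i ^ Fintype.card F ^ j := by
      rw [h1, hx]; simp
    rw [h2]
    apply Submodule.sub_mem
    · refine Submodule.smul_mem _ (⟨al (fx F m i), hfx i⟩ : K) (Submodule.subset_span ?_)
      exact ⟨⟨0, pow_pos (q_pos F) _⟩, rfl⟩
    · apply Submodule.sum_mem
      intro j hj
      refine Submodule.smul_mem _ (⟨al (c j), hc j⟩ : K) (Submodule.subset_span ?_)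
      exact ⟨⟨Fintype.card F ^ j, Nat.pow_lt_pow_right (one_lt_q F) (Finset.mem_range.mp hj)⟩, rfl⟩)
  set B := Algebra.adjoin K (Set.range x) with hB
  have hinv : ∀ a ∈ B, a⁻¹ ∈ B := inv_mem_of_le_span _ B hbox
  have hxB : ∀ i, x i ∈ B := fun i => Algebra.subset_adjoin ⟨i, rfl⟩
  have hKB : ∀ a ∈ K, a ∈ B := fun a ha => Subalgebra.algebraMap_mem B (⟨a, ha⟩ : K)
  have hDL : ∀ s (k : Fin m), al (DL (F := F) (xs F m) s (xs F m k)) ∈ B := by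
    intro s k
    obtain ⟨c, hc, hcx⟩ := DL_expand F (xs F m) (Subalgebra.toSubmodule KR)
      (fun a ha b hb => mul_mem (S := Subalgebra F _) ha hb) s (fun i _ => hfx i)
    rw [hcx, map_add, map_pow, map_sum, xs_fin]
    refine add_mem (pow_mem (hxB _) _) (Subalgebra.sum_mem _ fun j _ => ?_)
    rw [map_mul, map_pow]
    exact mul_mem (hKB _ (hc j)) (pow_mem (hxB _) _)
  have hyB : ∀ d, ∀ s : Fin m, m - s ≤ d → al (X (Sum.inr s)) ∈ B := by
    intro d
    induction d with
    | zero => intro s h; have := s.2; omega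
    | succ d ih =>
      intro s hs
      have h1 := DL_Bf_mem F m KR hu s 0 (fun i _ => hfx i) (by simp)
      simp only [DL_zero, ys_fin] at h1
      rw [← Finset.add_sum_erase _ _ (Finset.mem_univ s)] at h1
      have h2 : al (∑ k ∈ Finset.univ.erase s, DL (F := F) (xs F m) s (xs F m k) * X (Sum.inr k)) ∈ B := by
        rw [map_sum]
        apply Subalgebra.sum_mem
        intro k hk
        have hne := Finset.ne_of_mem_erase hk
        rw [map_mul]
        rcases lt_or_ge (k : ℕ) s with hlt | hge
        · rw [DL_self F _ hlt]; simp
        · have : (k : ℕ) ≠ s := fun h => hne (Fin.ext h)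
          exact mul_mem (hDL _ _) (ih k (by omega))
      have h3 : al (X (Sum.inr s)) = (al (fx F m s))⁻¹ *
          (al (DL (F := F) (xs F m) s (xs F m s) * X (Sum.inr s) +
            ∑ k ∈ Finset.univ.erase s, DL (F := F) (xs F m) s (xs F m k) * X (Sum.inr k)) -
          al (∑ k ∈ Finset.univ.erase s, DL (F := F) (xs F m) s (xs F m k) * X (Sum.inr k))) := by
        rw [map_add, add_sub_cancel_right, map_mul]
        change _ = (al (fx F m s))⁻¹ * (al (fx F m s) * _)
        rw [inv_mul_cancel_left₀]
        rw [Ne, map_eq_zero_iff al halinj]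
        exact fx_ne_zero F m s.2
      rw [h3]
      exact mul_mem (hinv _ (hKB _ (hfx _))) (sub_mem (hKB _ h1) h2)
  have hR : ∀ a, al a ∈ B := by
    intro a
    induction a using MvPolynomial.induction_on with
    | C r =>
      apply hKB
      have : al (C r) = algebraMap k L (algebraMap F k r) := by
        rw [← IsScalarTower.algebraMap_apply, ← al.commutes]; rfl
      rw [this]
      exact K.algebraMap_mem _
    | add p q hp hq => rw [map_add]; exact add_mem hp hq
    | mul_X p i hp =>
      rw [map_mul]
      refine mul_mem hp ?_
      rcases i with i | i
      · exact hxB i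
      · exact hyB m i (by omega)
  intro z
  obtain ⟨a, b, hb, rfl⟩ := IsFractionRing.div_surjective (A := MvPolynomial (Fin m ⊕ Fin m) F) z
  apply hbox
  rw [div_eq_mul_inv]
  exact mul_mem (hR a) (hinv _ (hR b))

open scoped IntermediateField.algebraAdjoinAdjoin in
theorem uE_indep (p : Eidx F (m + 1) → MvPolynomial (Fin m ⊕ Fin m) F)
    (hp : ∑ e, psi F m (p e) * uE F (m + 1) (uInv F m) e = 0) : ∀ e, p e = 0 := by
  let L := FractionRing (MvPolynomial (Fin m ⊕ Fin m) F)
  let al : MvPolynomial (Fin m ⊕ Fin m) F →ₐ[F] L := IsScalarTower.toAlgHom F _ L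
  have halinj : Function.Injective al := IsFractionRing.injective (MvPolynomial (Fin m ⊕ Fin m) F) L
  let Sg : Set L := Set.range fun c => al (gpsi F m c)
  let k := IntermediateField.adjoin F Sg
  have hae : ∀ p, al (psi F m p) = aeval (fun c => al (gpsi F m c)) p := by
    intro p
    rw [psi, ← AlgHom.comp_apply, comp_aeval]
  have hadj : Algebra.adjoin F Sg = (aeval (R := F) (fun c => al (gpsi F m c))).range :=
    Algebra.adjoin_range_eq_range_aeval F _
  have hpk : ∀ p, al (psi F m p) ∈ k := by
    intro p
    apply IntermediateField.algebra_adjoin_le_adjoin F Sg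
    rw [hadj, hae]
    exact ⟨p, rfl⟩
  have hv : LinearIndependent k (fun d => al (vpsi F m d)) := by
    rw [← LinearIndependent.iff_fractionRing (R := Algebra.adjoin F Sg) (K := k),
      Fintype.linearIndependent_iff]
    intro g hg
    have : ∀ d, ∃ p, (g d : L) = al (psi F m p) := by
      intro d
      have := hadj.le (g d).2
      obtain ⟨p, hp⟩ := this
      exact ⟨p, by rw [hae]; exact hp.symm⟩
    choose P hP using this
    have h1 : ∑ d, psi F m (P d) * vpsi F m d = 0 := by
      apply halinj
      rw [map_zero, ← hg, map_sum]
      apply Finset.sum_congr rfl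
      intro d _
      rw [map_mul, ← hP]
      rfl
    have h2 := psi_indep F m P h1
    intro d
    apply Subtype.ext
    rw [hP, h2]
    simp
  have hspan : ∀ a ∈ Aal F (m + 1), al (rho F m (AlgHom.id F _) 0 a) ∈
      Submodule.span k (Set.range fun e => al (uE F (m + 1) (uInv F m) e)) := by
    intro a ha
    obtain ⟨P, hP⟩ := pi_A F m a ha
    rw [hP, map_sum]
    apply Submodule.sum_mem
    intro e _
    rw [map_mul]
    exact Submodule.smul_mem _ (⟨_, hpk (P e)⟩ : k) (Submodule.subset_span ⟨e, rfl⟩)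
  have hli : LinearIndependent k (fun e => al (uE F (m + 1) (uInv F m) e)) := by
    refine dimcount _ (fun d => al (vpsi F m d)) (fun d : (i : Fin m) → Fin (Fintype.card F ^ (i : ℕ)) =>
      ∏ i, (algebraMap _ L (X (Sum.inl i) : MvPolynomial (Fin m ⊕ Fin m) F)) ^ (d i : ℕ)) ?_ ?_ hv ?_
      (card_count F m) ?_
    · have := hspan 1 (one_mem _)
      rwa [map_one, map_one] at this
    · intro e e'
      have := hspan _ (mul_mem (uE_mem_A F (m + 1) e) (uE_mem_A F (m + 1) e'))
      rwa [map_mul, map_mul, rho_uE, rho_uE] at this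
    · intro K hK
      have hK' : ∀ a ∈ Aal F (m + 1), al (rho F m (AlgHom.id F _) 0 a) ∈ K := fun a ha => hK (hspan a ha)
      refine frac_span F m K ?_ ?_
      · intro j
        have := hK' _ (u_mem_A F (m + 1) j)
        rwa [rho_u] at this
      · intro i
        by_cases hi : i < m
        · have := hK' _ (G_mem_A F (m + 1) (fy_mem_G F (m + 1) i))
          rwa [rho_fy F m _ _ i hi] at this
        · rw [fy_ge F m (by omega), map_zero]; exact zero_mem _
    · rw [Fintype.card_pos_iff]
      exact ⟨fun i => ⟨0, pow_pos (q_pos F) _⟩⟩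
  rw [Fintype.linearIndependent_iff] at hli
  have h1 := hli (fun e => ⟨_, hpk (p e)⟩) (by
    have := congrArg al hp
    rw [map_zero, map_sum] at this
    rw [← this]
    apply Finset.sum_congr rfl
    intro e _
    rw [map_mul]
    rfl)
  intro e
  apply psi_inj F m
  apply halinj
  rw [map_zero, map_zero]
  exact congrArg Subtype.val (h1 e)

end keyindep

open MvPolynomial Matrix

section divis
set_option linter.unusedSectionVars false

variable (F : Type) [Field F] [Fintype F] (m : ℕ)

theorem kap_ker (p : MvPolynomial (Fin (m + 1) ⊕ Fin (m + 1)) F) (hp : kap F m p = 0) :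
    ∃ p', p = X (Sum.inl 0) * p' := by
  let s0 : MvPolynomial (Fin m ⊕ Fin m) F →ₐ[F] (MvPolynomial (Fin (m + 1) ⊕ Fin (m + 1)) F) :=
    aeval (Sum.elim (fun i => X (Sum.inl i.succ)) (fun i => X (Sum.inr i.castSucc)))
  let s : Polynomial (MvPolynomial (Fin m ⊕ Fin m) F) →+* (MvPolynomial (Fin (m + 1) ⊕ Fin (m + 1)) F) :=
    Polynomial.eval₂RingHom s0.toRingHom (X (Sum.inr (Fin.last m)))
  have key : ∀ p, (X (Sum.inl 0) : MvPolynomial (Fin (m + 1) ⊕ Fin (m + 1)) F) ∣ p - s (kap F m p) := by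
    intro p
    induction p using MvPolynomial.induction_on with
    | C r =>
      have h1 : kap F m (C r) = Polynomial.C (C r) := (kap F m).commutes r
      have h2 : s0 (C r) = C r := s0.commutes r
      have h3 : s (Polynomial.C (C r)) = s0 (C r) := Polynomial.eval₂_C _ _
      rw [h1, h3, h2, sub_self]
      exact dvd_zero _
    | add p q hp hq =>
      rw [map_add, map_add, add_sub_add_comm]
      exact dvd_add hp hq
    | mul_X p i hp =>
      have hi : (X (Sum.inl 0) : MvPolynomial (Fin (m + 1) ⊕ Fin (m + 1)) F) ∣ X i - s (kap F m (X i)) := by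
        have h3 : ∀ j, s (Polynomial.C (X j)) = s0 (X j) := fun j => Polynomial.eval₂_C _ _
        have h4 : s (Polynomial.X) = X (Sum.inr (Fin.last m)) := Polynomial.eval₂_X _ _
        rcases i with i | i
        · refine Fin.cases ?_ (fun i => ?_) i
          · rw [kap, aeval_X, Sum.elim_inl, Fin.cons_zero, map_zero, sub_zero]
          · rw [kap, aeval_X, Sum.elim_inl, Fin.cons_succ, h3]
            simp [s0]
        · refine Fin.lastCases ?_ (fun i => ?_) i
          · rw [kap, aeval_X, Sum.elim_inr, Fin.snoc_last, h4, sub_self]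
            exact dvd_zero _
          · rw [kap, aeval_X, Sum.elim_inr, Fin.snoc_castSucc, h3]
            simp [s0]
      rw [map_mul, map_mul]
      have : p * X i - s (kap F m p) * s (kap F m (X i)) =
        (p - s (kap F m p)) * X i + s (kap F m p) * (X i - s (kap F m (X i))) := by ring
      rw [this]
      exact dvd_add (Dvd.dvd.mul_right hp _) (Dvd.dvd.mul_left hi _)
  have := key p
  rwa [hp, map_zero, sub_zero] at this

theorem DL_natDegree (z : ℕ → MvPolynomial (Fin m ⊕ Fin m) F) (s : ℕ) :
    (DL (F := F) (fun i => Polynomial.C (z i)) s (Polynomial.X)).natDegree ≠ 0 := by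
  rw [DL_eq_prod]
  have : ∀ α : Fin s → F, (Polynomial.X + ∑ j : Fin s,
      algebraMap F (Polynomial (MvPolynomial (Fin m ⊕ Fin m) F)) (α j) * Polynomial.C (z j)) =
      Polynomial.X + Polynomial.C (∑ j : Fin s, algebraMap F _ (α j) * z j) := by
    intro α
    rw [map_sum]
    simp [Polynomial.algebraMap_apply]
  simp only [this]
  rw [Polynomial.natDegree_prod_of_monic _ _ (fun α _ => Polynomial.monic_X_add_C _)]
  simp only [Polynomial.natDegree_X_add_C]
  simp

theorem div_x0 (a) (ha : a ∈ Aal F (m + 1)) (b) (hab : a = X (Sum.inl 0) * b) : b ∈ Aal F (m + 1) := by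
  obtain ⟨p, hp⟩ := A_span F (m + 1) a ha
  let ι : MvPolynomial (Fin m ⊕ Fin m) F →ₐ[F] Polynomial (MvPolynomial (Fin m ⊕ Fin m) F) :=
    IsScalarTower.toAlgHom F _ _
  have hι : ∀ x, ι x = Polynomial.C x := fun x => rfl
  have h0 : rho F m ι Polynomial.X a = 0 := by
    rw [hab, map_mul]
    simp [rho]
  set g := rho F m ι Polynomial.X (fy F (m + 1) m) with hg
  have hgd : g.natDegree ≠ 0 := by
    rw [hg, rho_fy_last]
    exact DL_natDegree F m _ _
  let H : Polynomial (MvPolynomial (Fin m ⊕ Fin m) F) :=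
    ∑ e, (kap F m (p e)).map (psi F m).toRingHom * Polynomial.C (uE F (m + 1) (uInv F m) e)
  have hH : H.comp g = 0 := by
    rw [← h0, hp, map_sum]
    simp only [H]
    rw [Polynomial.sum_comp]
    apply Finset.sum_congr rfl
    intro e _
    rw [map_mul, rho_phi, rho_uE, Polynomial.mul_comp, Polynomial.C_comp, Polynomial.comp,
      Polynomial.eval₂_map]
    rfl
  have hH0 : H = 0 := by
    rcases Polynomial.comp_eq_zero_iff.mp hH with h | ⟨_, h⟩
    · exact h
    · exfalso; apply hgd; rw [h, Polynomial.natDegree_C]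
  have hc : ∀ i e, (kap F m (p e)).coeff i = 0 := by
    intro i
    apply uE_indep F m
    have := congrArg (fun P => Polynomial.coeff P i) hH0
    simpa [H, Polynomial.finsetSum_coeff] using this
  have hk : ∀ e, ∃ p', p e = X (Sum.inl 0) * p' := fun e =>
    kap_ker F m _ (Polynomial.ext fun i => by rw [hc]; simp)
  choose p' hp' using hk
  have hb : b = ∑ e, phi F (m + 1) (p' e) * uE F (m + 1) (uInv F (m + 1)) e := by
    have hx : (X (Sum.inl 0) : MvPolynomial (Fin (m + 1) ⊕ Fin (m + 1)) F) ≠ 0 := X_ne_zero _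
    apply mul_left_cancel₀ hx
    rw [← hab, hp, Finset.mul_sum]
    apply Finset.sum_congr rfl
    intro e _
    rw [hp', map_mul]
    have : phi F (m + 1) (X (Sum.inl 0)) = X (Sum.inl 0) := by
      simp [phi, fx, DL_zero, xs]
    rw [this, mul_assoc]
  rw [hb]
  refine Subalgebra.sum_mem _ fun e _ => mul_mem ?_ (uE_mem_A F (m + 1) e)
  generalize p' e = r
  induction r using MvPolynomial.induction_on with
  | C r =>
    rw [show phi F (m + 1) (C r) = algebraMap F _ r from (phi F (m + 1)).commutes r]
    exact (Aal F (m + 1)).algebraMap_mem r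
  | add p q hp hq => rw [map_add]; exact add_mem hp hq
  | mul_X p i hp =>
    rw [map_mul]
    refine mul_mem hp ?_
    rcases i with i | i
    · simpa [phi] using G_mem_A F (m + 1) (fx_mem_G F (m + 1) i)
    · simpa [phi] using G_mem_A F (m + 1) (fy_mem_G F (m + 1) i)

theorem div_x0_pow (N : ℕ) (b) (h : (X (Sum.inl 0)) ^ N * b ∈ Aal F (m + 1)) : b ∈ Aal F (m + 1) := by
  induction N with
  | zero => simpa using h
  | succ N ih =>
    apply ih
    exact div_x0 F m _ h _ (by ring)

end divis

open MvPolynomial Matrix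

section elim
set_option linter.unusedSectionVars false

theorem elim_step (F : Type) [Field F] [Fintype F] {R : Type*} [CommRing R] [IsDomain R] [Algebra F R]
    (B : Subalgebra F R) (t a b c : R) (ha : a ∈ B) (hb : b ∈ B) (hc : c ≠ 0)
    (ht : t ^ Fintype.card F = a + b * t) (φ : F → R →ₐ[F] R) (hφ : ∀ α, ∀ x ∈ B, φ α x = x)
    (hφt : ∀ α, φ α t = t + algebraMap F R α * c)
    (g : R) (hg : g ∈ Algebra.adjoin B {t}) (hinv : ∀ α, φ α g = g) : g ∈ B := by
  have hq := one_lt_q F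
  rw [Algebra.adjoin_singleton_eq_range_aeval] at hg
  obtain ⟨P0, hP0⟩ := hg
  let Q : Polynomial B := Polynomial.X ^ Fintype.card F -
    (Polynomial.C ⟨b, hb⟩ * Polynomial.X + Polynomial.C ⟨a, ha⟩)
  have hdeg : (Polynomial.C (⟨b, hb⟩ : B) * Polynomial.X + Polynomial.C (⟨a, ha⟩ : B)).degree < (Fintype.card F : WithBot ℕ) := by
    refine lt_of_le_of_lt Polynomial.degree_linear_le ?_
    exact_mod_cast hq
  have hQ : Q.Monic := Polynomial.monic_X_pow_sub hdeg
  have hQd : Q.natDegree = Fintype.card F := by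
    apply Polynomial.natDegree_eq_of_degree_eq_some
    rw [Polynomial.degree_sub_eq_left_of_degree_lt, Polynomial.degree_X_pow]
    rwa [Polynomial.degree_X_pow]
  have hQt : Polynomial.aeval t Q = 0 := by
    simp only [Q, map_sub, map_pow, Polynomial.aeval_X, map_add, map_mul, Polynomial.aeval_C, ht]
    change a + b * t - (b * t + a) = 0
    ring
  let P := P0 %ₘ Q
  have hP : Polynomial.aeval t P = g := by
    rw [Polynomial.aeval_modByMonic_eq_self_of_root hQt]
    exact hP0
  have hPd : P.natDegree < Fintype.card F := by
    rw [← hQd]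
    apply Polynomial.natDegree_modByMonic_lt _ hQ
    intro h
    rw [h, Polynomial.natDegree_one] at hQd
    omega
  let W : Polynomial R := P.map (algebraMap B R) - Polynomial.C g
  have hWd : W.natDegree < Fintype.card F := by
    simp only [W]
    rw [Polynomial.natDegree_sub_C]
    exact lt_of_le_of_lt (Polynomial.natDegree_map_le) hPd
  have hW : W = 0 := by
    apply Polynomial.eq_zero_of_natDegree_lt_card_of_eval_eq_zero W
      (f := fun α : F => t + algebraMap F R α * c) ?_ ?_ hWd
    · intro α β h
      have h1 := mul_right_cancel₀ hc (add_left_cancel h)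
      exact (algebraMap F R).injective h1
    · intro α
      have h1 : Polynomial.eval (t + algebraMap F R α * c) (P.map (algebraMap B R)) = φ α (Polynomial.aeval t P) := by
        rw [Polynomial.aeval_def, Polynomial.eval_map, ← hφt]
        rw [← RingHom.coe_coe (φ α), Polynomial.hom_eval₂]
        congr 1
        ext x
        exact (hφ α _ x.2).symm
      simp only [W, Polynomial.eval_sub, Polynomial.eval_C]
      rw [h1, hP, hinv, sub_self]
  have h0 := congrArg (fun p => Polynomial.coeff p 0) hW
  simp only [W, Polynomial.coeff_sub, Polynomial.coeff_map, Polynomial.coeff_C_zero, Polynomial.coeff_zero] at h0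
  have h1 : (algebraMap B R) (P.coeff 0) = g := sub_eq_zero.mp h0
  rw [← h1]
  exact (P.coeff 0).2

theorem elim_adj (F : Type) [Field F] {R : Type*} [CommRing R] [Algebra F R]
    (B : Subalgebra F R) (t : R) (G : Set R) (hG : ∀ x ∈ G, x ∈ B ∨ x = t) (g : R)
    (hg : g ∈ Algebra.adjoin F G) : g ∈ Algebra.adjoin B {t} := by
  induction hg using Algebra.adjoin_induction with
  | mem x hx =>
    rcases hG x hx with h | h
    · exact (Algebra.adjoin B {t}).algebraMap_mem (⟨x, h⟩ : B)
    · exact Algebra.subset_adjoin (Set.mem_singleton_iff.mpr h)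
  | algebraMap r => exact (Algebra.adjoin B {t}).algebraMap_mem (⟨_, B.algebraMap_mem r⟩ : B)
  | add x y _ _ hx hy => exact add_mem hx hy
  | mul x y _ _ hx hy => exact mul_mem hx hy

variable (F : Type) [Field F] [Fintype F]

/-- transvections -/
noncomputable def Tv (n : ℕ) (i j : Fin n) (α : F) :
    MvPolynomial (Fin n ⊕ Fin n) F →ₐ[F] MvPolynomial (Fin n ⊕ Fin n) F :=
  aeval (Sum.elim (fun k => X (Sum.inl k) + if k = j then C α * X (Sum.inl i) else 0)
    (fun k => X (Sum.inr k) - if k = i then C α * X (Sum.inr j) else 0))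

theorem Tv_inl (n : ℕ) (i j : Fin n) (α : F) (k) : Tv F n i j α (X (Sum.inl k)) =
    X (Sum.inl k) + if k = j then C α * X (Sum.inl i) else 0 := by simp [Tv]
theorem Tv_inr (n : ℕ) (i j : Fin n) (α : F) (k) : Tv F n i j α (X (Sum.inr k)) =
    X (Sum.inr k) - if k = i then C α * X (Sum.inr j) else 0 := by simp [Tv]

theorem u0_eq (n : ℕ) : uInv F n 0 = ∑ k : Fin n, X (Sum.inl k) * X (Sum.inr k) := by
  simp [uInv]

theorem Tv_u0 (n : ℕ) (i j : Fin n) (hij : i < j) (α : F) : Tv F n i j α (uInv F n 0) = uInv F n 0 := by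
  rw [u0_eq, map_sum]
  simp only [map_mul, Tv_inl, Tv_inr]
  have : ∀ k : Fin n, (X (Sum.inl k) + if k = j then C α * X (Sum.inl i) else 0) *
      (X (Sum.inr k) - if k = i then C α * X (Sum.inr j) else 0) =
      (X (Sum.inl k) * X (Sum.inr k) + (if k = j then C α * X (Sum.inl i) * X (Sum.inr j) else 0) -
        (if k = i then C α * X (Sum.inl i) * X (Sum.inr j) else 0) :
        MvPolynomial (Fin n ⊕ Fin n) F) := by
    intro k
    by_cases h1 : k = j
    · subst h1
      simp [ne_of_gt hij]; ring
    · by_cases h2 : k = i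
      · subst h2; simp [h1]; ring
      · simp [h1, h2]
  simp only [this]
  rw [Finset.sum_sub_distrib, Finset.sum_add_distrib]
  simp

variable (m : ℕ)

/-- the intermediate algebras -/
noncomputable def Cal (s : ℕ) : Subalgebra F (MvPolynomial (Fin (m + 1) ⊕ Fin (m + 1)) F) :=
  Algebra.adjoin F (Set.range (gtheta F m) ∪ {X (Sum.inl 0), uInv F (m + 1) 0} ∪
    (fun i : Fin m => X (Sum.inl i.succ)) '' {i | s ≤ (i : ℕ)})

theorem Cal_theta (s c) : gtheta F m c ∈ Cal F m s := Algebra.subset_adjoin (Or.inl (Or.inl ⟨c, rfl⟩))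
theorem Cal_x0 (s) : X (Sum.inl 0) ∈ Cal F m s := Algebra.subset_adjoin (Or.inl (Or.inr (Or.inl rfl)))
theorem Cal_u0 (s) : uInv F (m + 1) 0 ∈ Cal F m s := Algebra.subset_adjoin (Or.inl (Or.inr (Or.inr rfl)))
theorem Cal_x (s) (i : Fin m) (h : s ≤ (i : ℕ)) : X (Sum.inl i.succ) ∈ Cal F m s :=
  Algebra.subset_adjoin (Or.inr ⟨i, h, rfl⟩)

theorem C_pow_q {n : ℕ} (α : F) : (C α : MvPolynomial (Fin n ⊕ Fin n) F) ^ Fintype.card F = C α := by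
  rw [← C_pow, FiniteField.pow_card]

theorem Cal_step (s : ℕ) (hs : s < m) (g) (hg : g ∈ Cal F m s)
    (hinv : ∀ α, Tv F (m + 1) 0 (Fin.succ ⟨s, hs⟩) α g = g) : g ∈ Cal F m (s + 1) := by
  let s' : Fin m := ⟨s, hs⟩
  have hq := one_lt_q F
  refine elim_step F (Cal F m (s + 1)) (X (Sum.inl s'.succ)) (gtheta F m (Sum.inl s'))
    (X (Sum.inl 0) ^ (Fintype.card F - 1)) (X (Sum.inl 0)) (Cal_theta F m _ _)
    (pow_mem (Cal_x0 F m _) _) (X_ne_zero _) ?_ (fun α => Tv F (m + 1) 0 s'.succ α) ?_ ?_ g ?_ hinv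
  · simp [gtheta]
  · intro α x hx
    have : ∀ x ∈ Cal F m (s + 1), x ∈ AlgHom.equalizer (Tv F (m + 1) 0 s'.succ α) (AlgHom.id F _) := by
      intro x hx
      refine (Algebra.adjoin_le ?_ : Cal F m (s + 1) ≤ _) hx
      have h0 : Tv F (m + 1) 0 s'.succ α (X (Sum.inl 0)) = X (Sum.inl 0) := by
        rw [Tv_inl, if_neg (Fin.succ_ne_zero _).symm, add_zero]
      rintro _ ((⟨c, rfl⟩ | (rfl | rfl)) | ⟨i, hi, rfl⟩)
      · change Tv F (m + 1) 0 s'.succ α _ = _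
        rcases c with i | i
        · simp only [gtheta, Sum.elim_inl, map_sub, map_mul, map_pow, h0, AlgHom.id_apply]
          rw [Tv_inl]
          by_cases h : i = s'
          · subst h
            rw [if_pos rfl, add_pow_q, mul_pow, C_pow_q, mul_add]
            obtain ⟨k, hk⟩ : ∃ k, Fintype.card F = k + 1 := ⟨Fintype.card F - 1, by omega⟩
            rw [hk, Nat.add_sub_cancel]
            ring
          · rw [if_neg (fun hh => h (Fin.succ_injective _ hh)), add_zero]
        · simp only [gtheta, Sum.elim_inr, AlgHom.id_apply]
          rw [Tv_inr, if_neg (Fin.succ_ne_zero _), sub_zero]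
      · exact h0
      · exact Tv_u0 F (m + 1) _ _ (Fin.succ_pos _) α
      · change Tv F (m + 1) 0 s'.succ α (X (Sum.inl i.succ)) = X (Sum.inl i.succ)
        rw [Tv_inl, if_neg, add_zero]
        intro hh
        have := Fin.succ_injective _ hh
        subst this
        change s + 1 ≤ s at hi
        omega
    exact this x hx
  · intro α
    rw [Tv_inl, if_pos rfl]
    rfl
  · refine elim_adj F _ _ _ ?_ g hg
    rintro _ ((⟨c, rfl⟩ | (rfl | rfl)) | ⟨i, hi, rfl⟩)
    · exact Or.inl (Cal_theta F m _ _)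
    · exact Or.inl (Cal_x0 F m _)
    · exact Or.inl (Cal_u0 F m _)
    · by_cases h : i = s'
      · subst h
        exact Or.inr rfl
      · refine Or.inl (Cal_x F m _ _ ?_)
        change s ≤ (i : ℕ) at hi
        have : (i : ℕ) ≠ s := fun hh => h (Fin.ext hh)
        omega

theorem exists_pow (p : MvPolynomial (Fin (m + 1) ⊕ Fin (m + 1)) F) :
    ∃ N : ℕ, X (Sum.inl 0) ^ N * p ∈ Cal F m 0 := by
  have hx : ∀ i, X (Sum.inl i) ∈ Cal F m 0 := fun i => by
    refine Fin.cases (Cal_x0 F m 0) (fun i => Cal_x F m 0 i (Nat.zero_le _)) i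
  have hy : ∀ i : Fin m, X (Sum.inr i.succ) ∈ Cal F m 0 := fun i => Cal_theta F m 0 (Sum.inr i)
  induction p using MvPolynomial.induction_on with
  | C r => exact ⟨0, by rw [pow_zero, one_mul]; exact (Cal F m 0).algebraMap_mem r⟩
  | add p q hp hq =>
    obtain ⟨N, hN⟩ := hp
    obtain ⟨M, hM⟩ := hq
    refine ⟨N + M, ?_⟩
    have : X (Sum.inl 0) ^ (N + M) * (p + q) = X (Sum.inl 0) ^ M * (X (Sum.inl 0) ^ N * p) +
        X (Sum.inl 0) ^ N * (X (Sum.inl 0) ^ M * q) := by ring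
    rw [this]
    exact add_mem (mul_mem (pow_mem (hx 0) _) hN) (mul_mem (pow_mem (hx 0) _) hM)
  | mul_X p i hp =>
    obtain ⟨N, hN⟩ := hp
    rcases i with i | i
    · exact ⟨N, by rw [← mul_assoc]; exact mul_mem hN (hx i)⟩
    · refine Fin.cases ?_ (fun i => ?_) i
      · refine ⟨N + 1, ?_⟩
        have h1 : X (Sum.inl 0) * X (Sum.inr 0) = uInv F (m + 1) 0 -
            ∑ k : Fin m, X (Sum.inl k.succ) * X (Sum.inr k.succ) := by
          rw [u0_eq, Fin.sum_univ_succ]; ring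
        have : X (Sum.inl 0) ^ (N + 1) * (p * X (Sum.inr 0)) =
          (X (Sum.inl 0) ^ N * p) * (X (Sum.inl 0) * X (Sum.inr 0)) := by ring
        rw [this, h1]
        exact mul_mem hN (sub_mem (Cal_u0 F m 0) (Subalgebra.sum_mem _ fun k _ => mul_mem (hx _) (hy _)))
      · exact ⟨N, by rw [← mul_assoc]; exact mul_mem hN (hy i)⟩

theorem Cal_m (g) (hg : g ∈ Cal F m m) : ∃ (M : ℕ) (h : Fin M × Fin M → MvPolynomial (Fin m ⊕ Fin m) F),
    g = ∑ e : Fin M × Fin M, theta F m (h e) * (X (Sum.inl 0) ^ (e.1 : ℕ) * uInv F (m + 1) 0 ^ (e.2 : ℕ)) := by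
  let ev1 : Polynomial (MvPolynomial (Fin m ⊕ Fin m) F) →+* MvPolynomial (Fin (m + 1) ⊕ Fin (m + 1)) F :=
    Polynomial.eval₂RingHom (theta F m).toRingHom (X (Sum.inl 0))
  let ev : Polynomial (Polynomial (MvPolynomial (Fin m ⊕ Fin m) F)) →+* MvPolynomial (Fin (m + 1) ⊕ Fin (m + 1)) F :=
    Polynomial.eval₂RingHom ev1 (uInv F (m + 1) 0)
  have hth : ∀ h, ev (Polynomial.C (Polynomial.C h)) = theta F m h := by
    intro h
    simp [ev, ev1]
  have hev : ∃ P, ev P = g := by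
    induction hg using Algebra.adjoin_induction with
    | mem x hx =>
      rcases hx with (⟨c, rfl⟩ | (rfl | rfl)) | ⟨i, hi, rfl⟩
      · exact ⟨Polynomial.C (Polynomial.C (X c)), by rw [hth]; simp [theta]⟩
      · exact ⟨Polynomial.C Polynomial.X, by simp [ev, ev1]⟩
      · exact ⟨Polynomial.X, by simp [ev]⟩
      · have := i.2
        change m ≤ (i : ℕ) at hi
        omega
    | algebraMap r => exact ⟨Polynomial.C (Polynomial.C (C r)), by rw [hth]; exact (theta F m).commutes r⟩
    | add x y _ _ hx hy =>
      obtain ⟨P, rfl⟩ := hx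
      obtain ⟨Q, rfl⟩ := hy
      exact ⟨P + Q, map_add _ _ _⟩
    | mul x y _ _ hx hy =>
      obtain ⟨P, rfl⟩ := hx
      obtain ⟨Q, rfl⟩ := hy
      exact ⟨P * Q, map_mul _ _ _⟩
  obtain ⟨P, rfl⟩ := hev
  let M := P.natDegree + 1 + ∑ b ∈ Finset.range (P.natDegree + 1), (P.coeff b).natDegree
  have hM1 : P.natDegree < M := by simp only [M]; omega
  have hM2 : ∀ b, (P.coeff b).natDegree < M := by
    intro b
    by_cases hb : b < P.natDegree + 1
    · have := Finset.single_le_sum (f := fun b => (P.coeff b).natDegree) (fun _ _ => Nat.zero_le _)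
        (Finset.mem_range.mpr hb)
      simp only [M]
      omega
    · rw [Polynomial.coeff_eq_zero_of_natDegree_lt (by omega)]
      simp only [Polynomial.natDegree_zero, M]
      omega
  refine ⟨M, fun e => (P.coeff e.2).coeff e.1, ?_⟩
  rw [Fintype.sum_prod_type_right]
  change Polynomial.eval₂ ev1 _ P = _
  rw [Polynomial.eval₂_eq_sum_range' _ hM1, Finset.sum_range]
  apply Finset.sum_congr rfl
  intro b _
  change Polynomial.eval₂ (theta F m).toRingHom _ _ * _ = _
  rw [Polynomial.eval₂_eq_sum_range' _ (hM2 b), Finset.sum_range, Finset.sum_mul]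
  apply Finset.sum_congr rfl
  intro a _
  rw [mul_assoc]
  rfl

end elim

open MvPolynomial Matrix

section mainind
set_option linter.unusedSectionVars false

variable (F : Type) [Field F] [Fintype F] (m : ℕ)

theorem theta_xs (i : ℕ) (_h : i < m) : theta F m (xs F m i) =
    xs F (m + 1) (i + 1) ^ Fintype.card F - xs F (m + 1) 0 ^ (Fintype.card F - 1) * xs F (m + 1) (i + 1) := by
  rw [xs, dif_pos _h, xs, dif_pos (by omega), xs, dif_pos (by omega), theta, aeval_X]
  rfl

theorem theta_ys (i : ℕ) (h : i < m) : theta F m (ys F m i) = ys F (m + 1) i := by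
  rw [ys, dif_pos h, ys, dif_pos (by omega), theta, aeval_X, gtheta, Sum.elim_inr]
  congr 2
  ext
  simp
  omega

theorem theta_fx (i : ℕ) (h : i < m) : theta F m (fx F m i) = fx F (m + 1) (i + 1) := by
  rw [fx, fx, DL_map, DL_shift, theta_xs F m i h]
  apply DL_congr
  intro j hj
  exact theta_xs F m j (by omega)

theorem theta_fy (i : ℕ) (h : i < m) : theta F m (fy F m i) = fy F (m + 1) i := by
  rw [fy, fy, DL_map, theta_ys F m i h]
  apply DL_congr
  intro j hj
  exact theta_ys F m j (by omega)

theorem theta_Bf (i j : ℕ) : theta F m (Bf F m i j) = Bf F (m + 1) (i + 1) j -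
    X (Sum.inl 0) ^ ((Fintype.card F - 1) * Fintype.card F ^ i) * Bf F (m + 1) i j := by
  have hq := q_pos F
  have hsub : ∀ a b : MvPolynomial (Fin (m + 1) ⊕ Fin (m + 1)) F,
      (a - b) ^ Fintype.card F ^ i = a ^ Fintype.card F ^ i - b ^ Fintype.card F ^ i := by
    intro a b
    rw [← frob_apply, ← frob_apply, ← frob_apply, map_sub]
  rw [Bf, Bf, Bf, map_sum, Fin.sum_univ_succ, Fin.sum_univ_succ, mul_add, add_sub_add_comm]
  have h0 : (X (Sum.inl 0) ^ Fintype.card F ^ (i + 1) * X (Sum.inr 0) ^ Fintype.card F ^ j -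
      X (Sum.inl 0) ^ ((Fintype.card F - 1) * Fintype.card F ^ i) *
      (X (Sum.inl 0) ^ Fintype.card F ^ i * X (Sum.inr 0) ^ Fintype.card F ^ j) :
      MvPolynomial (Fin (m + 1) ⊕ Fin (m + 1)) F) = 0 := by
    rw [← mul_assoc, ← pow_add]
    have : (Fintype.card F - 1) * Fintype.card F ^ i + Fintype.card F ^ i = Fintype.card F ^ (i + 1) := by
      obtain ⟨k, hk⟩ : ∃ k, Fintype.card F = k + 1 := ⟨Fintype.card F - 1, by omega⟩
      rw [hk, Nat.add_sub_cancel, pow_succ]; ring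
    rw [this, sub_self]
  rw [h0, zero_add, Finset.mul_sum, ← Finset.sum_sub_distrib]
  apply Finset.sum_congr rfl
  intro k _
  rw [map_mul, map_pow, map_pow, theta, aeval_X, aeval_X, gtheta, Sum.elim_inl, Sum.elim_inr, hsub,
    mul_pow, ← pow_mul, ← pow_mul, ← pow_succ']
  ring

theorem x0_mem_A : X (Sum.inl 0) ∈ Aal F (m + 1) := by
  have := G_mem_A F (m + 1) (fx_mem_G F (m + 1) 0)
  simpa [fx, DL_zero, xs] using this

theorem theta_A (a) (ha : a ∈ Aal F m) : theta F m a ∈ Aal F (m + 1) := by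
  have : Aal F m ≤ (Aal F (m + 1)).comap (theta F m) := by
    apply Algebra.adjoin_le
    have hB : ∀ i j, theta F m (Bf F m i j) ∈ Aal F (m + 1) := by
      intro i j
      rw [theta_Bf]
      exact sub_mem (Bf_mem_A F _ _ _) (mul_mem (pow_mem (x0_mem_A F m) _) (Bf_mem_A F _ _ _))
    rintro _ ((⟨i, rfl⟩ | ⟨i, rfl⟩) | ⟨j, rfl⟩)
    · change theta F m (fx F m i) ∈ Aal F (m + 1)
      by_cases h : i < m
      · rw [theta_fx F m i h]; exact G_mem_A F _ (fx_mem_G F _ _)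
      · rw [fx_ge F m (by omega), map_zero]; exact zero_mem _
    · change theta F m (fy F m i) ∈ Aal F (m + 1)
      by_cases h : i < m
      · rw [theta_fy F m i h]; exact G_mem_A F _ (fy_mem_G F _ _)
      · rw [fy_ge F m (by omega), map_zero]; exact zero_mem _
    · change theta F m (uInv F m j) ∈ Aal F (m + 1)
      obtain ⟨k, rfl | rfl⟩ := Int.eq_nat_or_neg j
      · rw [uInv_nat]; exact hB _ _
      · rw [uInv_neg_nat]; exact hB _ _
  exact this ha

theorem Tv_theta (i j : Fin m) (α : F) (p) : Tv F (m + 1) i.succ j.succ α (theta F m p) =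
    theta F m (Tv F m i j α p) := by
  have : (Tv F (m + 1) i.succ j.succ α).comp (theta F m) = (theta F m).comp (Tv F m i j α) := by
    have h0 : Tv F (m + 1) i.succ j.succ α (X (Sum.inl 0)) = X (Sum.inl 0) := by
      rw [Tv_inl, if_neg (Fin.succ_ne_zero _).symm, add_zero]
    have hC : theta F m (C α) = C α := (theta F m).commutes α
    have hl : ∀ k, theta F m (X (Sum.inl k)) = X (Sum.inl k.succ) ^ Fintype.card F -
      X (Sum.inl 0) ^ (Fintype.card F - 1) * X (Sum.inl k.succ) := fun k => by simp [theta, gtheta]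
    have hr : ∀ k, theta F m (X (Sum.inr k)) = X (Sum.inr k.succ) := fun k => by simp [theta, gtheta]
    apply MvPolynomial.algHom_ext
    rintro (k | k)
    · rw [AlgHom.comp_apply, AlgHom.comp_apply, hl, Tv_inl, map_add, hl, map_sub, map_mul, map_pow, map_pow, h0, Tv_inl]
      by_cases h : k = j
      · subst h
        rw [if_pos rfl, if_pos rfl, map_mul, hC, hl, add_pow_q, mul_pow, C_pow_q]
        ring
      · rw [if_neg (fun hh => h (Fin.succ_injective _ hh)), if_neg h, map_zero, add_zero, add_zero]
    · rw [AlgHom.comp_apply, AlgHom.comp_apply, hr, Tv_inr, Tv_inr, map_sub, hr]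
      by_cases h : k = i
      · subst h
        rw [if_pos rfl, if_pos rfl, map_mul, hC, hr]
      · rw [if_neg (fun hh => h (Fin.succ_injective _ hh)), if_neg h, map_zero]
  exact DFunLike.congr_fun this p

theorem main_induction (n : ℕ) (p : MvPolynomial (Fin n ⊕ Fin n) F)
    (hp : ∀ i j : Fin n, i < j → ∀ α, Tv F n i j α p = p) : p ∈ Aal F n := by
  induction n with
  | zero =>
    rw [eq_C_of_isEmpty p]
    exact (Aal F 0).algebraMap_mem _
  | succ m ih =>
    obtain ⟨N, hN⟩ := exists_pow F m p
    apply div_x0_pow F m N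
    set g := X (Sum.inl 0) ^ N * p with hg
    have hinv : ∀ i j : Fin (m + 1), i < j → ∀ α, Tv F (m + 1) i j α g = g := by
      intro i j hij α
      rw [hg, map_mul, hp i j hij, map_pow, Tv_inl, if_neg, add_zero]
      rintro rfl
      exact absurd hij (Fin.not_lt_zero i)
    have hC : ∀ s ≤ m, g ∈ Cal F m s := by
      intro s hs
      induction s with
      | zero => exact hN
      | succ s ihs =>
        exact Cal_step F m s (by omega) g (ihs (by omega)) (fun α => hinv _ _ (Fin.succ_pos _) α)
    obtain ⟨M, h, hgh⟩ := Cal_m F m g (hC m le_rfl)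
    have hh : ∀ e, h e ∈ Aal F m := by
      intro e
      apply ih
      intro i j hij α
      have h1 := hinv i.succ j.succ (Fin.succ_lt_succ_iff.mpr hij) α
      have h2 : ∑ e : Fin M × Fin M, theta F m (Tv F m i j α (h e) - h e) *
          (X (Sum.inl 0) ^ (e.1 : ℕ) * uInv F (m + 1) 0 ^ (e.2 : ℕ)) = 0 := by
        have h0 : Tv F (m + 1) i.succ j.succ α (X (Sum.inl 0)) = X (Sum.inl 0) := by
          rw [Tv_inl, if_neg (Fin.succ_ne_zero _).symm, add_zero]
        rw [← sub_eq_zero, hgh, map_sum, ← Finset.sum_sub_distrib] at h1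
        rw [← h1]
        apply Finset.sum_congr rfl
        intro e _
        rw [map_mul, map_mul, map_pow, map_pow, h0, Tv_u0 F _ _ _ (Fin.succ_lt_succ_iff.mpr hij),
          Tv_theta, map_sub, sub_mul]
      exact sub_eq_zero.mp (theta_indep F m M _ h2 e)
    rw [hgh]
    exact Subalgebra.sum_mem _ fun e _ => mul_mem (theta_A F m _ (hh e))
      (mul_mem (pow_mem (x0_mem_A F m) _) (pow_mem (u_mem_A F _ _) _))

end mainind

open MvPolynomial Matrix

section final
set_option linter.unusedSectionVars false

variable (F : Type) [Field F] [Fintype F] (n : ℕ)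

theorem DL_unip {R : Type*} [CommRing R] [Algebra F R] (z z' : ℕ → R) (s : ℕ)
    (h : ∀ i < s, z' i - z i ∈ Submodule.span F (z '' {j | j < i})) (T : R) :
    DL (F := F) z' s T = DL (F := F) z s T := by
  induction s generalizing T with
  | zero => rfl
  | succ s ih =>
    have hs : DL (F := F) z s (z' s - z s) = 0 := by
      have : Submodule.span F (z '' {j | j < s}) ≤ LinearMap.ker (DL (F := F) z s) := by
        rw [Submodule.span_le]
        rintro _ ⟨j, hj, rfl⟩
        exact DL_self F z hj
      exact this (h s (by omega))
    rw [map_sub, sub_eq_zero] at hs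
    have ih' := ih (fun i hi => h i (by omega))
    rw [DL_succ, DL_succ, ih', ih', hs]

theorem DL_unip_self {R : Type*} [CommRing R] [Algebra F R] (z z' : ℕ → R) (s : ℕ)
    (h : ∀ i ≤ s, z' i - z i ∈ Submodule.span F (z '' {j | j < i})) :
    DL (F := F) z' s (z' s) = DL (F := F) z s (z s) := by
  have h1 := DL_unip F z z' (s + 1) (fun i hi => h i (by omega))
  rw [DL_unip F z z' s (fun i hi => h i (by omega))]
  have : Submodule.span F (z '' {j | j < s}) ≤ LinearMap.ker (DL (F := F) z s) := by
    rw [Submodule.span_le]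
    rintro _ ⟨j, hj, rfl⟩
    exact DL_self F z hj
  have hs : DL (F := F) z s (z' s - z s) = 0 := this (h s le_rfl)
  rwa [map_sub, sub_eq_zero] at hs

theorem inv_unip (σ : GL (Fin n) F) (hσ : isUpperUnipotent F n σ) : isUpperUnipotent F n σ⁻¹ := by
  have hb : Matrix.BlockTriangular ((σ : Matrix (Fin n) (Fin n) F)) id := fun i j hij => hσ.2 i j hij
  haveI : Invertible (σ : Matrix (Fin n) (Fin n) F) := σ.invertible
  have hb' : Matrix.BlockTriangular ((σ⁻¹ : GL (Fin n) F) : Matrix (Fin n) (Fin n) F) id := by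
    rw [Matrix.coe_units_inv]
    exact Matrix.blockTriangular_inv_of_blockTriangular hb
  refine ⟨fun i => ?_, fun i j hij => hb' hij⟩
  have h1 : ((σ : Matrix (Fin n) (Fin n) F) * ((σ⁻¹ : GL (Fin n) F) : Matrix (Fin n) (Fin n) F)) i i = 1 := by
    rw [Units.mul_inv]; simp
  rw [Matrix.mul_apply, Finset.sum_eq_single i] at h1
  · rwa [hσ.1, one_mul] at h1
  · intro k _ hk
    rcases lt_or_gt_of_ne hk with h | h
    · rw [hσ.2 i k h, zero_mul]
    · rw [hb' h, mul_zero]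
  · simp

theorem gact_inl (σ : GL (Fin n) F) (j) : gact F n σ (X (Sum.inl j)) =
    ∑ i : Fin n, C ((σ : Matrix (Fin n) (Fin n) F) i j) * X (Sum.inl i) := by simp [gact]
theorem gact_inr (σ : GL (Fin n) F) (j) : gact F n σ (X (Sum.inr j)) =
    ∑ i : Fin n, C (((σ⁻¹ : GL (Fin n) F) : Matrix (Fin n) (Fin n) F) j i) * X (Sum.inr i) := by
  simp [gact]

theorem gact_fx (σ : GL (Fin n) F) (hσ : isUpperUnipotent F n σ) (s : ℕ) (hs : s < n) :
    gact F n σ (fx F n s) = fx F n s := by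
  rw [fx, DL_map]
  apply DL_unip_self
  intro i hi
  have hin : i < n := by omega
  rw [xs, dif_pos hin, gact_inl, ← Finset.add_sum_erase _ _ (Finset.mem_univ (⟨i, hin⟩ : Fin n)),
    hσ.1, C_1, one_mul, add_sub_cancel_left]
  apply Submodule.sum_mem
  intro k hk
  have hk' := Finset.ne_of_mem_erase hk
  rcases lt_or_gt_of_ne hk' with h | h
  · rw [← smul_eq_C_mul]
    apply Submodule.smul_mem
    apply Submodule.subset_span
    exact ⟨k, h, xs_fin F n k⟩
  · rw [hσ.2 _ _ h, C_0, zero_mul]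
    exact Submodule.zero_mem _

theorem gact_fy (σ : GL (Fin n) F) (hσ : isUpperUnipotent F n σ) (s : ℕ) (hs : s < n) :
    gact F n σ (fy F n s) = fy F n s := by
  have hσ' := inv_unip F n σ hσ
  rw [fy, DL_map]
  apply DL_unip_self
  intro i hi
  have hin : i < n := by omega
  rw [ys, dif_pos hin, gact_inr, ← Finset.add_sum_erase _ _ (Finset.mem_univ (⟨n - 1 - i, by omega⟩ : Fin n)),
    hσ'.1, C_1, one_mul, add_sub_cancel_left]
  apply Submodule.sum_mem
  intro k hk
  have hk' := Finset.ne_of_mem_erase hk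
  rcases lt_or_gt_of_ne hk' with h | h
  · rw [hσ'.2 _ _ h, C_0, zero_mul]
    exact Submodule.zero_mem _
  · rw [← smul_eq_C_mul]
    apply Submodule.smul_mem
    apply Submodule.subset_span
    refine ⟨n - 1 - k, ?_, ys_fin F n k⟩
    have h' : n - 1 - i < (k : ℕ) := h
    have := k.2
    change n - 1 - (k : ℕ) < i
    omega

theorem gact_Bf (σ : GL (Fin n) F) (a b : ℕ) : gact F n σ (Bf F n a b) = Bf F n a b := by
  have hC : ∀ (i : ℕ) (r : F), frob F (MvPolynomial (Fin n ⊕ Fin n) F) i (C r) = C r := fun i r =>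
    (frob F (MvPolynomial (Fin n ⊕ Fin n) F) i).commutes r
  rw [Bf, map_sum]
  have h1 : ∀ k : Fin n, gact F n σ (X (Sum.inl k) ^ Fintype.card F ^ a * X (Sum.inr k) ^ Fintype.card F ^ b) =
      ∑ i : Fin n, ∑ j : Fin n, C ((σ : Matrix (Fin n) (Fin n) F) i k *
        ((σ⁻¹ : GL (Fin n) F) : Matrix (Fin n) (Fin n) F) k j) *
        (X (Sum.inl i) ^ Fintype.card F ^ a * X (Sum.inr j) ^ Fintype.card F ^ b) := by
    intro k
    rw [map_mul, map_pow, map_pow, gact_inl, gact_inr, ← frob_apply, ← frob_apply, map_sum, map_sum,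
      Finset.sum_mul_sum]
    apply Finset.sum_congr rfl
    intro i _
    apply Finset.sum_congr rfl
    intro j _
    rw [map_mul, map_mul, hC, hC, frob_apply, frob_apply, C_mul]
    ring
  simp only [h1]
  rw [Finset.sum_comm]
  apply Finset.sum_congr rfl
  intro i _
  rw [Finset.sum_comm]
  have h2 : ∀ j : Fin n, ∑ k : Fin n, C ((σ : Matrix (Fin n) (Fin n) F) i k *
        ((σ⁻¹ : GL (Fin n) F) : Matrix (Fin n) (Fin n) F) k j) *
        (X (Sum.inl i) ^ Fintype.card F ^ a * X (Sum.inr j) ^ Fintype.card F ^ b) =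
      (if i = j then (X (Sum.inl i) ^ Fintype.card F ^ a * X (Sum.inr j) ^ Fintype.card F ^ b) else 0 :
        MvPolynomial (Fin n ⊕ Fin n) F) := by
    intro j
    rw [← Finset.sum_mul, ← map_sum, ← Matrix.mul_apply, Units.mul_inv, Matrix.one_apply]
    split_ifs <;> simp
  simp only [h2]
  simp

theorem gact_u (σ : GL (Fin n) F) (j : ℤ) : gact F n σ (uInv F n j) = uInv F n j := by
  obtain ⟨k, rfl | rfl⟩ := Int.eq_nat_or_neg j
  · rw [uInv_nat]; exact gact_Bf F n σ _ _
  · rw [uInv_neg_nat]; exact gact_Bf F n σ _ _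

theorem Tv_gact (i j : Fin n) (hij : i < j) (α : F) : ∃ σ : GL (Fin n) F, isUpperUnipotent F n σ ∧
    gact F n σ = Tv F n i j α := by
  have hne : i ≠ j := ne_of_lt hij
  refine ⟨⟨Matrix.transvection i j α, Matrix.transvection i j (-α), ?_, ?_⟩, ⟨?_, ?_⟩, ?_⟩
  · rw [Matrix.transvection_mul_transvection_same i j hne]; simp
  · rw [Matrix.transvection_mul_transvection_same i j hne]; simp
  · intro k
    change Matrix.transvection i j α k k = 1
    simp only [Matrix.transvection, Matrix.add_apply, Matrix.one_apply_eq, Matrix.single_apply]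
    rw [if_neg (by rintro ⟨rfl, h⟩; exact hne h.symm), add_zero]
  · intro k l hkl
    change Matrix.transvection i j α k l = 0
    simp only [Matrix.transvection, Matrix.add_apply, Matrix.single_apply]
    rw [Matrix.one_apply_ne (ne_of_gt hkl), if_neg, add_zero]
    rintro ⟨rfl, rfl⟩
    exact absurd hij (not_lt.mpr hkl.le)
  · apply MvPolynomial.algHom_ext
    rintro (k | k)
    · rw [gact_inl, Tv_inl]
      change ∑ a : Fin n, C (Matrix.transvection i j α a k) * X (Sum.inl a) = _
      simp only [Matrix.transvection, Matrix.add_apply, Matrix.single_apply, Matrix.one_apply, C_add, add_mul,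
        Finset.sum_add_distrib]
      congr 1
      · simp
      · by_cases h : k = j
        · subst h; simp [apply_ite C, ite_mul]
        · simp [h, Ne.symm h]
    · rw [gact_inr, Tv_inr]
      change ∑ a : Fin n, C (Matrix.transvection i j (-α) k a) * X (Sum.inr a) = _
      simp only [Matrix.transvection, Matrix.add_apply, Matrix.single_apply, Matrix.one_apply, C_add, add_mul,
        Finset.sum_add_distrib, sub_eq_add_neg]
      congr 1
      · simp
      · by_cases h : k = i
        · subst h; simp [apply_ite C, ite_mul]
        · simp [h, Ne.symm h]

end final

/-- Theorem (main, part (a), generation): for `n ≥ 2` the invariant ring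
`F_q[V ⊕ V*]^{U_n}` is the `F_q`-subalgebra generated by
`f_1,…,f_n, f_1^*,…,f_n^*, u_{2-n},…,u_{n-2}`. -/
theorem invariantRing_Un_eq_adjoin (hn : 2 ≤ n) (p : MvPolynomial (Fin n ⊕ Fin n) F) :
    (∀ σ : GL (Fin n) F, isUpperUnipotent F n σ → gact F n σ p = p) ↔
      p ∈ Algebra.adjoin F
        ((Set.range fun i : Fin n => fX F n (i.val + 1)) ∪
          (Set.range fun i : Fin n => fY F n (i.val + 1)) ∪
          (uInv F n '' Set.Icc (2 - (n : ℤ)) ((n : ℤ) - 2))) := by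
  constructor
  · intro hp
    have hA : p ∈ Aal F n := by
      apply main_induction
      intro i j hij α
      obtain ⟨σ, hσ, h⟩ := Tv_gact F n i j hij α
      rw [← h]
      exact hp σ hσ
    obtain ⟨P, hP⟩ := A_span F n p hA
    rw [hP]
    refine Subalgebra.sum_mem _ fun e _ => mul_mem ?_ (Subalgebra.prod_mem _ fun j _ => pow_mem ?_ _)
    · generalize P e = r
      induction r using MvPolynomial.induction_on with
      | C r =>
        rw [show phi F n (C r) = algebraMap F _ r from (phi F n).commutes r]
        exact Subalgebra.algebraMap_mem _ r
      | add p q hp hq => rw [map_add]; exact add_mem hp hq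
      | mul_X p i hp =>
        rw [map_mul]
        refine mul_mem hp ?_
        rcases i with i | i
        · rw [phi, aeval_X, Sum.elim_inl, ← fX_eq F n i i.2]
          exact Algebra.subset_adjoin (Or.inl (Or.inl ⟨i, rfl⟩))
        · rw [phi, aeval_X, Sum.elim_inr, ← fY_eq F n i i.2]
          exact Algebra.subset_adjoin (Or.inl (Or.inr ⟨i, rfl⟩))
    · exact Algebra.subset_adjoin (Or.inr ⟨j.1, Finset.mem_Icc.mp j.2, rfl⟩)
  · intro hp σ hσ
    induction hp using Algebra.adjoin_induction with
    | mem x hx =>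
      rcases hx with (⟨i, rfl⟩ | ⟨i, rfl⟩) | ⟨j, _, rfl⟩
      · simp only [fX_eq F n i i.2]
        exact gact_fx F n σ hσ i i.2
      · simp only [fY_eq F n i i.2]
        exact gact_fy F n σ hσ i i.2
      · exact gact_u F n σ j
    | algebraMap r => exact (gact F n σ).commutes r
    | add x y _ _ hx hy => rw [map_add, hx, hy]
    | mul x y _ _ hx hy => rw [map_mul, hx, hy]
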